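/- Let Ω ⊂ X be an open set and let E ⊂ X be a μ-measurable set with P(E,Ω) < ∞. Then the sets I_E ∩ Ω and O_E ∩ Ω are 1-quasiopen, where I_E and O_E are the measure-theoretic interior and exterior of E. -/

import Mathlib

open MeasureTheory Filter Metric Set
open scoped Topology ENNReal NNReal symmDiff

noncomputable section

namespace PaperBV

/-- A rectifiable curve parametrized by arc-length: a `1`-Lipschitz map on `[0, len]`. -/
structure Curve (X : Type*) [MetricSpace X] where
  len : ℝ
  len_nonneg : 0 ≤ len
  toFun : ℝ → X
  lip : LipschitzOnWith 1 toFun (Set.Icc 0 len)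

variable {X : Type*} [MetricSpace X] [MeasurableSpace X] [BorelSpace X]

/-- The curve lies in the set `A`. -/
def Curve.In (γ : Curve X) (A : Set X) : Prop :=
  ∀ t ∈ Set.Icc (0 : ℝ) γ.len, γ.toFun t ∈ A

/-- The curve integral `∫_γ g ds` of a nonnegative function, for an
arc-length parametrized curve. -/
def Curve.integral (γ : Curve X) (g : X → ℝ≥0∞) : ℝ≥0∞ :=
  ∫⁻ t in Set.Icc (0 : ℝ) γ.len, g (γ.toFun t)

/-- The upper gradient inequality `|u(x) - u(y)| ≤ ∫_γ g ds` along the curve `γ`,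
where `x, y` are the endpoints of `γ`. -/
def UGIneq (u : X → ℝ) (g : X → ℝ≥0∞) (γ : Curve X) : Prop :=
  ENNReal.ofReal |u (γ.toFun 0) - u (γ.toFun γ.len)| ≤ γ.integral g

/-- `g` is an upper gradient of `u` on `X`: `g` is nonnegative (automatic in `ℝ≥0∞`),
Borel, and the upper gradient inequality holds along every curve. -/
def IsUpperGradient (u : X → ℝ) (g : X → ℝ≥0∞) : Prop :=
  Measurable g ∧ ∀ γ : Curve X, UGIneq u g γ

/-- A family of curves has zero `1`-modulus: there is a nonnegative Borel function
`ρ ∈ L¹(X)` whose curve integral is infinite along every curve of the family. -/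
def ZeroMod (μ : Measure X) (Γ : Set (Curve X)) : Prop :=
  ∃ ρ : X → ℝ≥0∞, Measurable ρ ∧ (∫⁻ x, ρ x ∂μ) < ∞ ∧ ∀ γ ∈ Γ, γ.integral ρ = ∞

/-- `g` is a `1`-weak upper gradient of `u` in `A`: `g` is nonnegative, `μ`-measurable,
and the upper gradient inequality holds along `1`-a.e. curve in `A`. -/
def IsWeakUpperGradientOn (μ : Measure X) (u : X → ℝ) (g : X → ℝ≥0∞) (A : Set X) : Prop :=
  AEMeasurable g μ ∧ ZeroMod μ {γ : Curve X | γ.In A ∧ ¬ UGIneq u g γ}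

/-- A nonnegative function `g` belongs to `L¹_loc(A)`. -/
def LIntegrableLocOn (μ : Measure X) (g : X → ℝ≥0∞) (A : Set X) : Prop :=
  ∀ x ∈ A, ∃ r > (0 : ℝ), (∫⁻ y in A ∩ Metric.ball x r, g y ∂μ) < ∞

/-- `g` is the minimal `1`-weak upper gradient of `u` in `A`: a `1`-weak upper gradient
satisfying `g ≤ g'` `μ`-a.e. in `A` for every `1`-weak upper gradient `g' ∈ L¹_loc(A)`. -/
def IsMinimalWUG (μ : Measure X) (u : X → ℝ) (g : X → ℝ≥0∞) (A : Set X) : Prop :=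
  IsWeakUpperGradientOn μ u g A ∧
    ∀ g' : X → ℝ≥0∞, IsWeakUpperGradientOn μ u g' A → LIntegrableLocOn μ g' A →
      ∀ᵐ x ∂(μ.restrict A), g x ≤ g' x

/-- The Newtonian norm `‖u‖_{N^{1,1}(A)}` (valued in `ℝ≥0∞`). -/
def NNorm (μ : Measure X) (A : Set X) (u : X → ℝ) : ℝ≥0∞ :=
  (∫⁻ x in A, ENNReal.ofReal |u x| ∂μ) +
    ⨅ (g : X → ℝ≥0∞) (_ : IsWeakUpperGradientOn μ u g A), ∫⁻ x in A, g x ∂μ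

/-- `u ∈ N^{1,1}(A)`. -/
def MemN11 (μ : Measure X) (A : Set X) (u : X → ℝ) : Prop :=
  NNorm μ A u < ∞

/-- `u ∈ N^{1,1}_loc(A)`: every point of `A` has a ball `B` with `u ∈ N^{1,1}(A ∩ B)`. -/
def MemN11Loc (μ : Measure X) (A : Set X) (u : X → ℝ) : Prop :=
  ∀ x ∈ A, ∃ r > (0 : ℝ), NNorm μ (A ∩ Metric.ball x r) u < ∞

/-- `u ∈ N^{1,1}(Ω')` for every bounded open `Ω' ⊆ X`. -/
def MemN11LocBounded (μ : Measure X) (u : X → ℝ) : Prop :=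
  ∀ Ω' : Set X, IsOpen Ω' → Bornology.IsBounded Ω' → NNorm μ Ω' u < ∞

/-- `u ∈ N^{1,1}_0(Ω)`: `u ∈ N^{1,1}(X)` and `u = 0` outside `Ω`. -/
def MemN110 (μ : Measure X) (Ω : Set X) (u : X → ℝ) : Prop :=
  MemN11 μ Set.univ u ∧ ∀ x ∉ Ω, u x = 0

/-- The `1`-capacity `capa₁(A) = inf {‖u‖_{N^{1,1}(X)} : u ∈ N^{1,1}(X), u ≥ 1 on A}`. -/
def capa1 (μ : Measure X) (A : Set X) : ℝ≥0∞ :=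
  ⨅ (u : X → ℝ) (_ : MemN11 μ Set.univ u) (_ : ∀ x ∈ A, 1 ≤ u x), NNorm μ Set.univ u

/-- `U` is `1`-quasiopen: for every `ε > 0` there is an open `G` with `capa₁(G) < ε`
such that `U ∪ G` is open. -/
def QuasiOpen (μ : Measure X) (U : Set X) : Prop :=
  ∀ ε : ℝ, 0 < ε → ∃ G : Set X, IsOpen G ∧ capa1 μ G < ENNReal.ofReal ε ∧ IsOpen (U ∪ G)

/-- `u ∈ L¹_loc(A)`. -/
def MemL1Loc (μ : Measure X) (A : Set X) (u : X → ℝ) : Prop :=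
  AEMeasurable u (μ.restrict A) ∧
    ∀ x ∈ A, ∃ r > (0 : ℝ), (∫⁻ y in A ∩ Metric.ball x r, ENNReal.ofReal |u y| ∂μ) < ∞

/-- `v i → u` in `L¹_loc(A)`: every `x ∈ A` has a ball `B` with `v i → u` in `L¹(A ∩ B)`. -/
def L1LocConv (μ : Measure X) (A : Set X) (v : ℕ → X → ℝ) (u : X → ℝ) : Prop :=
  ∀ x ∈ A, ∃ r > (0 : ℝ),
    Filter.Tendsto (fun i => ∫⁻ y in A ∩ Metric.ball x r, ENNReal.ofReal |v i y - u y| ∂μ)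
      Filter.atTop (𝓝 0)

/-- `u` is locally Lipschitz on `Ω`. -/
def LocLipOn (u : X → ℝ) (Ω : Set X) : Prop :=
  ∀ x ∈ Ω, ∃ r > (0 : ℝ), ∃ K : ℝ≥0, LipschitzOnWith K u (Ω ∩ Metric.ball x r)

/-- The total variation `‖Du‖(Ω)` of `u` in an open set `Ω`: the infimum of
`liminf_i ∫_Ω g_{v i} dμ` over sequences of locally Lipschitz functions `v i → u`
in `L¹_loc(Ω)`, where `g_{v i}` is the minimal `1`-weak upper gradient of `v i` in `Ω`. -/
def tvOpen (μ : Measure X) (Ω : Set X) (u : X → ℝ) : ℝ≥0∞ :=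
  ⨅ (v : ℕ → X → ℝ) (g : ℕ → X → ℝ≥0∞) (_ : ∀ i, LocLipOn (v i) Ω)
    (_ : ∀ i, IsMinimalWUG μ (v i) (g i) Ω) (_ : L1LocConv μ Ω v u),
    Filter.liminf (fun i => ∫⁻ x in Ω, g i x ∂μ) Filter.atTop

/-- The total variation `‖Du‖(A)` of `u` in an arbitrary set `A`:
`inf {‖Du‖(Ω) : Ω ⊇ A open}`. -/
def tv (μ : Measure X) (A : Set X) (u : X → ℝ) : ℝ≥0∞ :=
  ⨅ (Ω : Set X) (_ : IsOpen Ω) (_ : A ⊆ Ω), tvOpen μ Ω u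

/-- The perimeter `P(E, A) = ‖Dχ_E‖(A)` for arbitrary `A`. -/
def perim (μ : Measure X) (E A : Set X) : ℝ≥0∞ :=
  tv μ A (Set.indicator E (fun _ => (1 : ℝ)))

/-- The perimeter `P(E, Ω) = ‖Dχ_E‖(Ω)` for open `Ω`. -/
def perimOpen (μ : Measure X) (E Ω : Set X) : ℝ≥0∞ :=
  tvOpen μ Ω (Set.indicator E (fun _ => (1 : ℝ)))

/-- The measure `μ` is doubling with constant `Cd`. -/
def Doubling (μ : Measure X) (Cd : ℝ) : Prop :=
  1 ≤ Cd ∧ ∀ (x : X) (r : ℝ), 0 < r →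
    0 < μ (Metric.ball x (2 * r)) ∧
      μ (Metric.ball x (2 * r)) ≤ ENNReal.ofReal Cd * μ (Metric.ball x r) ∧
      μ (Metric.ball x r) < ∞

/-- The space supports a `(1,1)`-Poincaré inequality with constants `CP, lam`. -/
def Poincare (μ : Measure X) (CP lam : ℝ) : Prop :=
  1 ≤ CP ∧ 1 ≤ lam ∧ ∀ (x : X) (r : ℝ), 0 < r → ∀ (u : X → ℝ) (g : X → ℝ≥0∞),
    MemL1Loc μ Set.univ u → IsUpperGradient u g →
      ENNReal.ofReal (⨍ y in Metric.ball x r, |u y - ⨍ z in Metric.ball x r, u z ∂μ| ∂μ)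
        ≤ ENNReal.ofReal (CP * r) *
            ((∫⁻ y in Metric.ball x (lam * r), g y ∂μ) / μ (Metric.ball x (lam * r)))

/-- The restricted spherical Hausdorff content of codimension one. -/
def HR (μ : Measure X) (R : ℝ) (A : Set X) : ℝ≥0∞ :=
  ⨅ (c : ℕ → X) (r : ℕ → ℝ) (_ : ∀ i, 0 < r i ∧ r i ≤ R)
    (_ : A ⊆ ⋃ i, Metric.ball (c i) (r i)),
    ∑' i, μ (Metric.ball (c i) (r i)) / ENNReal.ofReal (r i)

/-- The codimension-one Hausdorff measure `H(A) = lim_{R → 0} H_R(A)`. -/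
def Hcodim (μ : Measure X) (A : Set X) : ℝ≥0∞ :=
  ⨆ (R : ℝ) (_ : 0 < R), HR μ R A

/-- The lower approximate limit `u^∧`. -/
def lowerApprox (μ : Measure X) (u : X → ℝ) (x : X) : EReal :=
  sSup ((fun t : ℝ => (t : EReal)) ''
    {t : ℝ | Filter.Tendsto
      (fun r => μ (Metric.ball x r ∩ {y | u y < t}) / μ (Metric.ball x r))
      (𝓝[>] (0 : ℝ)) (𝓝 0)})

/-- The upper approximate limit `u^∨`. -/
def upperApprox (μ : Measure X) (u : X → ℝ) (x : X) : EReal :=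
  sInf ((fun t : ℝ => (t : EReal)) ''
    {t : ℝ | Filter.Tendsto
      (fun r => μ (Metric.ball x r ∩ {y | t < u y}) / μ (Metric.ball x r))
      (𝓝[>] (0 : ℝ)) (𝓝 0)})

/-- `u ∈ BV_loc(X)`: `u ∈ L¹_loc(X)` with `‖Du‖(Ω') < ∞` for every bounded open `Ω'`. -/
def MemBVLoc (μ : Measure X) (u : X → ℝ) : Prop :=
  MemL1Loc μ Set.univ u ∧
    ∀ Ω' : Set X, IsOpen Ω' → Bornology.IsBounded Ω' → tvOpen μ Ω' u < ∞

/-- The measure-theoretic interior `I_E`. -/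
def mInterior (μ : Measure X) (E : Set X) : Set X :=
  {x | Filter.Tendsto (fun r => μ (Metric.ball x r \ E) / μ (Metric.ball x r))
    (𝓝[>] (0 : ℝ)) (𝓝 0)}

/-- The measure-theoretic exterior `O_E`. -/
def mExterior (μ : Measure X) (E : Set X) : Set X :=
  {x | Filter.Tendsto (fun r => μ (Metric.ball x r ∩ E) / μ (Metric.ball x r))
    (𝓝[>] (0 : ℝ)) (𝓝 0)}

/-- The measure-theoretic boundary `∂*E`: the points where both `E` and its complement
have positive upper density. -/
def mBoundary (μ : Measure X) (E : Set X) : Set X :=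
  {x | 0 < Filter.limsup (fun r => μ (Metric.ball x r ∩ E) / μ (Metric.ball x r))
        (𝓝[>] (0 : ℝ)) ∧
       0 < Filter.limsup (fun r => μ (Metric.ball x r \ E) / μ (Metric.ball x r))
        (𝓝[>] (0 : ℝ))}

/-!
For a level `α`, call a ball `B = B(y, r)` bad if the density of `E` is at least `α` in `B` but
at most `2α` in `4B`. Take near-optimal approximations `v i` of `χ_E` and multiply them by `1 - η`,
with `η` a sum of tents over disjoint bad balls. The added energy is at most a constant times
`α μ(B) / r` per ball, since `v i` has small mean on `4B`; by the boxing inequality, for `α ≤ α₀`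
the energy removed exceeds this by at least `α μ(B) / r`. When the radii shrink to zero the
modified functions still converge to `χ_E` in `L¹_loc`, so the infimum defining `P(E, Ω)` forces
`∑ μ(B) / r → 0`.

A Vitali covering now shows that the union `G` of the bad balls of level `α₀ 2⁻ʲ` and radius at
most `R j` has capacity below `ε` once the `R j` are small. A point `y ∉ O_E` close to a point of
`O_E ∩ Ω` is the centre of such a bad ball: along the radii `4⁻ᵏ s` the densities of `E` start
small but do not tend to zero, so they cross one of the levels. Hence `(O_E ∩ Ω) ∪ G` is open. The
interior `I_E` is the exterior of the complement.
-/

section Curves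

omit [MeasurableSpace X] [BorelSpace X]

/-- The constant extension of a curve to the whole real line, which makes it globally
`1`-Lipschitz, so that derivatives along the curve can be taken in `ℝ`. -/
def Curve.extend (γ : Curve X) (t : ℝ) : X := γ.toFun (projIcc 0 γ.len γ.len_nonneg t)

lemma Curve.extend_of_mem (γ : Curve X) {t : ℝ} (ht : t ∈ Icc 0 γ.len) :
    γ.extend t = γ.toFun t := by
  rw [Curve.extend, projIcc_of_mem γ.len_nonneg ht]

lemma Curve.extend_zero (γ : Curve X) : γ.extend 0 = γ.toFun 0 :=
  γ.extend_of_mem (left_mem_Icc.2 γ.len_nonneg)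

lemma Curve.extend_len (γ : Curve X) : γ.extend γ.len = γ.toFun γ.len :=
  γ.extend_of_mem (right_mem_Icc.2 γ.len_nonneg)

lemma Curve.In.extend_mem {γ : Curve X} {A : Set X} (hγ : γ.In A) (t : ℝ) : γ.extend t ∈ A :=
  hγ _ (projIcc 0 γ.len γ.len_nonneg t).2

lemma Curve.lipschitzWith_extend (γ : Curve X) : LipschitzWith 1 γ.extend := by
  have hcomp := (lipschitzOnWith_iff_restrict.1 γ.lip).comp (LipschitzWith.projIcc γ.len_nonneg)
  rwa [one_mul] at hcomp

lemma Curve.continuous_extend (γ : Curve X) : Continuous γ.extend :=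
  γ.lipschitzWith_extend.continuous

lemma Curve.integral_eq_lintegral_extend (γ : Curve X) (g : X → ℝ≥0∞) :
    γ.integral g = ∫⁻ t in Icc 0 γ.len, g (γ.extend t) :=
  setLIntegral_congr_fun measurableSet_Icc fun t ht => by simp only [γ.extend_of_mem ht]

lemma Curve.integral_mono (γ : Curve X) {g h : X → ℝ≥0∞} (hgh : ∀ x, g x ≤ h x) :
    γ.integral g ≤ γ.integral h :=
  lintegral_mono fun _ => hgh _

lemma UGIneq.mono {u : X → ℝ} {g h : X → ℝ≥0∞} {γ : Curve X} (hu : UGIneq u g γ)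
    (hgh : ∀ x, g x ≤ h x) : UGIneq u h γ :=
  hu.trans (γ.integral_mono hgh)

/-- The restriction of (the constant extension of) a curve to `[a, b]`, translated so that its
parameter starts at `0`. -/
def Curve.subcurve (γ : Curve X) {a b : ℝ} (hab : a ≤ b) : Curve X where
  len := b - a
  len_nonneg := sub_nonneg.2 hab
  toFun t := γ.extend (a + t)
  lip := by
    have hshift : LipschitzWith 1 (fun t : ℝ => a + t) := (isometry_add_left a).lipschitz
    have hcomp := γ.lipschitzWith_extend.comp hshift
    rw [one_mul] at hcomp
    exact hcomp.lipschitzOnWith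

lemma Curve.In.subcurve {γ : Curve X} {A : Set X} (hγ : γ.In A) {a b : ℝ} (hab : a ≤ b) :
    (γ.subcurve hab).In A :=
  fun _ _ => hγ.extend_mem _

lemma Curve.integral_subcurve (γ : Curve X) {a b : ℝ} (hab : a ≤ b) (g : X → ℝ≥0∞) :
    (γ.subcurve hab).integral g = ∫⁻ t in Icc a b, g (γ.extend t) := by
  rw [← (measurePreserving_add_left (volume : Measure ℝ) a).setLIntegral_comp_preimage_emb
    (measurableEmbedding_addLeft a) (fun t => g (γ.extend t)) (Icc a b)]
  simp [Curve.integral, Curve.subcurve]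

lemma volume_ball_inter_Icc_pos {L t δ : ℝ} (hL : 0 < L) (ht : t ∈ Icc 0 L) (hδ : 0 < δ) :
    0 < volume (ball t δ ∩ Icc 0 L) := by
  have ht_closure : t ∈ closure (Ioo 0 L) := by rwa [closure_Ioo hL.ne]
  have hne : (ball t δ ∩ Ioo 0 L).Nonempty :=
    mem_closure_iff_nhds.1 ht_closure _ (ball_mem_nhds t hδ)
  exact ((isOpen_ball.inter isOpen_Ioo).measure_pos volume hne).trans_le
    (measure_mono (inter_subset_inter_right _ Ioo_subset_Icc_self))

lemma Curve.integral_eq_top_of_eq_top_on_isOpen (γ : Curve X) (hlen : 0 < γ.len) {U : Set X}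
    (hU : IsOpen U) {g : X → ℝ≥0∞} (hg : ∀ x ∈ U, g x = ∞) {t : ℝ} (ht : t ∈ Icc 0 γ.len)
    (htU : γ.toFun t ∈ U) : γ.integral g = ∞ := by
  rw [← γ.extend_of_mem ht] at htU
  obtain ⟨δ, hδ, hball⟩ := Metric.isOpen_iff.1 (hU.preimage γ.continuous_extend) t htU
  refine top_unique ?_
  calc (∞ : ℝ≥0∞) = ∫⁻ _ in ball t δ ∩ Icc 0 γ.len, ∞ := by
        rw [setLIntegral_const, ENNReal.top_mul (volume_ball_inter_Icc_pos hlen ht hδ).ne']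
    _ = ∫⁻ s in ball t δ ∩ Icc 0 γ.len, g (γ.extend s) :=
        setLIntegral_congr_fun (measurableSet_ball.inter measurableSet_Icc)
          fun s hs => (hg _ (hball hs.1)).symm
    _ ≤ γ.integral g := by
        rw [γ.integral_eq_lintegral_extend]
        exact lintegral_mono_set inter_subset_right

lemma Curve.integral_lt_top_of_locally (γ : Curve X) {g : X → ℝ≥0∞}
    (hg : ∀ t, ∃ U, IsOpen U ∧ γ.extend t ∈ U ∧ γ.integral (U.indicator g) < ∞) :
    γ.integral g < ∞ := by
  rw [γ.integral_eq_lintegral_extend, ← inter_self (Icc 0 γ.len)]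
  refine isCompact_Icc.induction_on
    (p := fun S => ∫⁻ t in S ∩ Icc 0 γ.len, g (γ.extend t) < ∞) (by simp) ?_ ?_ ?_
  · exact fun S T hST hT =>
      (lintegral_mono_set (inter_subset_inter_left _ hST)).trans_lt hT
  · intro S T hS hT
    rw [union_inter_distrib_right]
    exact (lintegral_union_le _ _ _).trans_lt (ENNReal.add_lt_top.2 ⟨hS, hT⟩)
  · intro t _
    obtain ⟨U, hU, htU, hfin⟩ := hg t
    have hV : IsOpen (γ.extend ⁻¹' U) := hU.preimage γ.continuous_extend
    refine ⟨γ.extend ⁻¹' U, mem_nhdsWithin_of_mem_nhds (hV.mem_nhds htU), ?_⟩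
    rw [γ.integral_eq_lintegral_extend] at hfin
    rwa [← setLIntegral_indicator hV.measurableSet]

end Curves

section OneVariable

lemma abs_deriv_le_of_eventually_abs_sub_le {f F : ℝ → ℝ} {F' t : ℝ} (hF : HasDerivAt F F' t)
    (hf : DifferentiableAt ℝ f t) (hle : ∀ᶠ y in 𝓝[>] t, |f y - f t| ≤ F y - F t) :
    |deriv f t| ≤ F' := by
  have hGT : 𝓝[>] t ≤ 𝓝[≠] t := nhdsWithin_mono _ fun y hy => ne_of_gt hy
  refine le_of_tendsto_of_tendsto
    ((hasDerivAt_iff_tendsto_slope.1 hf.hasDerivAt).mono_left hGT).abs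
    ((hasDerivAt_iff_tendsto_slope.1 hF).mono_left hGT) ?_
  filter_upwards [hle, self_mem_nhdsWithin] with y hy hty
  have hpos : 0 < y - t := sub_pos.2 hty
  rw [slope_def_field, slope_def_field, abs_div, abs_of_pos hpos]
  gcongr

lemma abs_sub_le_intervalIntegral_of_ofReal_le_lintegral {f : ℝ → ℝ} {G : ℝ → ℝ≥0∞} {a b : ℝ}
    (hab : a ≤ b) (hG : Measurable G) (hfin : ∫⁻ t in Icc a b, G t < ∞)
    (hf : ENNReal.ofReal |f a - f b| ≤ ∫⁻ t in Icc a b, G t) :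
    |f b - f a| ≤ ∫ t in a..b, (G t).toReal := by
  rw [intervalIntegral.integral_of_le hab, ← integral_Icc_eq_integral_Ioc,
    integral_toReal hG.aemeasurable (ae_lt_top hG hfin.ne), abs_sub_comm]
  exact (ENNReal.ofReal_le_iff_le_toReal hfin.ne).1 hf

lemma ae_abs_deriv_le_of_forall_ofReal_abs_sub_le_lintegral {f : ℝ → ℝ} {G : ℝ → ℝ≥0∞} {L : ℝ}
    (hL : 0 ≤ L) (hG : Measurable G) (hfin : ∫⁻ t in Icc 0 L, G t < ∞)
    (hf : ∀ a b, 0 ≤ a → a ≤ b → b ≤ L → ENNReal.ofReal |f a - f b| ≤ ∫⁻ t in Icc a b, G t) :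
    ∀ᵐ t ∂(volume.restrict (Icc 0 L)), ENNReal.ofReal |deriv f t| ≤ G t := by
  have hint : IntervalIntegrable (fun t => (G t).toReal) volume 0 L :=
    (intervalIntegrable_iff_integrableOn_Icc_of_le hL).2
      (integrable_toReal_of_lintegral_ne_top hG.aemeasurable hfin.ne)
  have hint_mono : ∀ b ∈ Icc 0 L, IntervalIntegrable (fun t => (G t).toReal) volume 0 b :=
    fun b hb => hint.mono_set (by
      rw [uIcc_of_le hL, uIcc_of_le hb.1]
      exact Icc_subset_Icc le_rfl hb.2)
  have hmem : ∀ᵐ t ∂(volume.restrict (Icc 0 L)), t ∈ Ioo 0 L := by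
    rw [Measure.restrict_congr_set Ioo_ae_eq_Icc.symm]
    exact ae_restrict_mem measurableSet_Ioo
  filter_upwards [ae_restrict_of_ae hint.ae_hasDerivAt_integral, ae_lt_top hG hfin.ne, hmem]
    with t hderiv hGt ht
  by_cases hd : DifferentiableAt ℝ f t
  swap
  · simp [deriv_zero_of_not_differentiableAt hd]
  rw [uIcc_of_le hL] at hderiv
  have htI : t ∈ Icc 0 L := Ioo_subset_Icc_self ht
  rw [ENNReal.ofReal_le_iff_le_toReal hGt.ne]
  refine abs_deriv_le_of_eventually_abs_sub_le (hderiv htI 0 (left_mem_Icc.2 hL)) hd ?_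
  filter_upwards [Ioo_mem_nhdsGT ht.2] with y hy
  have hyI : y ∈ Icc 0 L := ⟨ht.1.le.trans hy.1.le, hy.2.le⟩
  rw [intervalIntegral.integral_interval_sub_left (hint_mono y hyI) (hint_mono t htI)]
  exact abs_sub_le_intervalIntegral_of_ofReal_le_lintegral hy.1.le hG
    ((lintegral_mono_set (Icc_subset_Icc htI.1 hyI.2)).trans_lt hfin)
    (hf t y htI.1 hy.1.le hyI.2)

lemma ofReal_abs_sub_le_lintegral_of_ae_abs_deriv_le {f : ℝ → ℝ} {H : ℝ → ℝ≥0∞} {L : ℝ}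
    (hL : 0 ≤ L) {K : ℝ≥0} (hf : LipschitzOnWith K f (Icc 0 L))
    (hderiv : ∀ᵐ t ∂(volume.restrict (Icc 0 L)), ENNReal.ofReal |deriv f t| ≤ H t) :
    ENNReal.ofReal |f 0 - f L| ≤ ∫⁻ t in Icc 0 L, H t := by
  have hac : AbsolutelyContinuousOnInterval f 0 L := by
    rw [← uIcc_of_le hL] at hf
    exact hf.absolutelyContinuousOnInterval
  calc ENNReal.ofReal |f 0 - f L|
      = ‖∫ t in Icc 0 L, deriv f t‖ₑ := by
        rw [abs_sub_comm, ← hac.integral_deriv_eq_sub, intervalIntegral.integral_of_le hL,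
          ← integral_Icc_eq_integral_Ioc, Real.enorm_eq_ofReal_abs]
    _ ≤ ∫⁻ t in Icc 0 L, ‖deriv f t‖ₑ := enorm_integral_le_lintegral_enorm _
    _ ≤ ∫⁻ t in Icc 0 L, H t := by
        refine lintegral_mono_ae (hderiv.mono fun t ht => ?_)
        rwa [Real.enorm_eq_ofReal_abs]

end OneVariable

section LocallyLipschitz

section

omit [MeasurableSpace X] [BorelSpace X]

lemma locLipOn_of_lipschitzWith {u : X → ℝ} {K : ℝ≥0} (hu : LipschitzWith K u) (A : Set X) :
    LocLipOn u A :=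
  fun _ _ => ⟨1, one_pos, K, hu.lipschitzOnWith⟩

lemma LocLipOn.of_abs_sub_le {u v : X → ℝ} {Ω : Set X} (hu : LocLipOn u Ω)
    (hvu : ∀ x y, |v x - v y| ≤ |u x - u y|) : LocLipOn v Ω := by
  intro x hx
  obtain ⟨r, hr, K, hK⟩ := hu x hx
  exact ⟨r, hr, K, LipschitzOnWith.of_dist_le_mul fun y hy z hz =>
    (hvu y z).trans (hK.dist_le_mul y hy z hz)⟩

lemma LocLipOn.continuousOn {u : X → ℝ} {Ω : Set X} (hΩ : IsOpen Ω) (hu : LocLipOn u Ω) :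
    ContinuousOn u Ω := by
  intro x hx
  obtain ⟨r, hr, K, hK⟩ := hu x hx
  have hxr : x ∈ Ω ∩ ball x r := ⟨hx, mem_ball_self hr⟩
  exact ((hK.continuousOn x hxr).continuousAt
    ((hΩ.inter isOpen_ball).mem_nhds hxr)).continuousWithinAt

lemma LocLipOn.mul_one_sub {v η : X → ℝ} {Ω : Set X} (hv : LocLipOn v Ω)
    (hv_le : ∀ x, |v x| ≤ 1) {L : ℝ≥0} (hη : LipschitzWith L η) (hη_mem : ∀ x, η x ∈ Icc 0 1) :
    LocLipOn (fun x => v x * (1 - η x)) Ω := by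
  intro x hx
  obtain ⟨r, hr, K, hK⟩ := hv x hx
  refine ⟨r, hr, K + L, LipschitzOnWith.of_dist_le_mul fun a ha b hb => ?_⟩
  have habs : |1 - η a| ≤ 1 := abs_le.2 ⟨by linarith [(hη_mem a).2], by linarith [(hη_mem a).1]⟩
  calc |v a * (1 - η a) - v b * (1 - η b)|
      = |(v a - v b) * (1 - η a) - v b * (η a - η b)| := by ring_nf
    _ ≤ |v a - v b| * |1 - η a| + |v b| * |η a - η b| := by
        rw [← abs_mul, ← abs_mul]
        exact abs_sub _ _
    _ ≤ |v a - v b| + |η a - η b| := add_le_add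
        (mul_le_of_le_one_right (abs_nonneg _) habs)
        (mul_le_of_le_one_left (abs_nonneg _) (hv_le b))
    _ ≤ (K + L : ℝ≥0) * dist a b := by
        rw [NNReal.coe_add, add_mul]
        exact add_le_add (hK.dist_le_mul a ha b hb) (hη.dist_le_mul a b)

lemma LocLipOn.exists_lipschitzOnWith_comp_extend {u : X → ℝ} {Ω : Set X} (hu : LocLipOn u Ω)
    {γ : Curve X} (hγ : γ.In Ω) : ∃ K, LipschitzOnWith K (u ∘ γ.extend) (Icc 0 γ.len) := by
  refine LocallyLipschitzOn.exists_lipschitzOnWith_of_compact isCompact_Icc fun t _ => ?_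
  obtain ⟨r, hr, K, hK⟩ := hu _ (hγ.extend_mem t)
  refine ⟨K * 1, γ.extend ⁻¹' ball (γ.extend t) r, ?_,
    hK.comp γ.lipschitzWith_extend.lipschitzOnWith fun s hs => ⟨hγ.extend_mem s, hs⟩⟩
  exact mem_nhdsWithin_of_mem_nhds
    (γ.continuous_extend.continuousAt.preimage_mem_nhds (ball_mem_nhds _ hr))

lemma LocLipOn.ae_differentiableAt_comp_extend {u : X → ℝ} {Ω : Set X} (hu : LocLipOn u Ω)
    {γ : Curve X} (hγ : γ.In Ω) :
    ∀ᵐ t ∂(volume.restrict (Icc 0 γ.len)), DifferentiableAt ℝ (u ∘ γ.extend) t := by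
  obtain ⟨K, hK⟩ := hu.exists_lipschitzOnWith_comp_extend hγ
  rw [← uIcc_of_le γ.len_nonneg] at hK ⊢
  exact (ae_restrict_iff' measurableSet_uIcc).2
    hK.absolutelyContinuousOnInterval.ae_differentiableAt

lemma LocLipOn.ugIneq_of_ae_abs_deriv_le {u : X → ℝ} {Ω : Set X} (hu : LocLipOn u Ω)
    {γ : Curve X} (hγ : γ.In Ω) {g : X → ℝ≥0∞}
    (hderiv : ∀ᵐ t ∂(volume.restrict (Icc 0 γ.len)),
      ENNReal.ofReal |deriv (u ∘ γ.extend) t| ≤ g (γ.extend t)) :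
    UGIneq u g γ := by
  obtain ⟨K, hK⟩ := hu.exists_lipschitzOnWith_comp_extend hγ
  have hbound := ofReal_abs_sub_le_lintegral_of_ae_abs_deriv_le γ.len_nonneg hK hderiv
  rw [UGIneq, γ.integral_eq_lintegral_extend]
  simpa only [Function.comp_apply, γ.extend_zero, γ.extend_len] using hbound

end

lemma LocLipOn.measurable_indicator {u : X → ℝ} {Ω : Set X} (hΩ : IsOpen Ω) (hu : LocLipOn u Ω) :
    Measurable (Ω.indicator u) := by
  classical
  rw [← Set.piecewise_eq_indicator]
  exact (hu.continuousOn hΩ).measurable_piecewise continuousOn_const hΩ.measurableSet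

lemma Curve.ae_abs_deriv_le_of_ugIneq {u : X → ℝ} {Ω : Set X} {γ : Curve X} (hγ : γ.In Ω)
    {g ρ : X → ℝ≥0∞} (hg : Measurable g)
    (hug : ∀ γ : Curve X, γ.In Ω → γ.integral ρ < ∞ → UGIneq u g γ)
    (hρ_fin : γ.integral ρ < ∞) (hg_fin : γ.integral g < ∞) :
    ∀ᵐ t ∂(volume.restrict (Icc 0 γ.len)),
      ENNReal.ofReal |deriv (u ∘ γ.extend) t| ≤ g (γ.extend t) := by
  rw [γ.integral_eq_lintegral_extend] at hρ_fin hg_fin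
  refine ae_abs_deriv_le_of_forall_ofReal_abs_sub_le_lintegral γ.len_nonneg
    (hg.comp γ.continuous_extend.measurable) hg_fin fun a b ha hab hb => ?_
  have hsub : (γ.subcurve hab).integral ρ < ∞ := by
    rw [γ.integral_subcurve]
    exact (lintegral_mono_set (Icc_subset_Icc ha hb)).trans_lt hρ_fin
  have hug_sub : UGIneq u g (γ.subcurve hab) := hug _ (hγ.subcurve hab) hsub
  rw [UGIneq, γ.integral_subcurve] at hug_sub
  simpa [Curve.subcurve] using hug_sub

end LocallyLipschitz

section AlmostEveryCurve

lemma exists_measurable_ge_ae_eq {α : Type*} [MeasurableSpace α] {μ : Measure α} {g : α → ℝ≥0∞}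
    (hg : AEMeasurable g μ) :
    ∃ g' : α → ℝ≥0∞, Measurable g' ∧ (∀ x, g x ≤ g' x) ∧ g' =ᵐ[μ] g := by
  classical
  set N := toMeasurable μ {x | g x ≠ hg.mk g x}
  have hN : ∀ᵐ x ∂μ, x ∉ N := by
    rw [← measure_eq_zero_iff_ae_notMem, measure_toMeasurable]
    exact hg.ae_eq_mk
  refine ⟨N.piecewise (fun _ => ∞) (hg.mk g),
    measurable_const.piecewise (measurableSet_toMeasurable _ _) hg.measurable_mk, fun x => ?_, ?_⟩
  · by_cases hx : x ∈ N
    · simp [hx]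
    · rw [Set.piecewise_eq_of_notMem _ _ _ hx]
      exact (not_not.1 fun hne => hx (subset_toMeasurable _ _ hne)).le
  · filter_upwards [hN, hg.ae_eq_mk] with x hx hmk
    rw [Set.piecewise_eq_of_notMem _ _ _ hx, hmk]

lemma Curve.integral_mul_const (γ : Curve X) {ρ : X → ℝ≥0∞} (hρ : Measurable ρ) (c : ℝ≥0∞) :
    γ.integral (fun x => ρ x * c) = γ.integral ρ * c := by
  rw [γ.integral_eq_lintegral_extend, γ.integral_eq_lintegral_extend]
  exact lintegral_mul_const c (hρ.comp γ.continuous_extend.measurable)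

lemma exists_lintegral_lt_top_forall_curve_integral_lt_top {μ : Measure X} {ι : Type*}
    [Countable ι] (ρ : ι → X → ℝ≥0∞) (hρ : ∀ i, Measurable (ρ i))
    (hfin : ∀ i, ∫⁻ x, ρ i x ∂μ < ∞) :
    ∃ σ : X → ℝ≥0∞, Measurable σ ∧ ∫⁻ x, σ x ∂μ < ∞ ∧
      ∀ γ : Curve X, γ.integral σ < ∞ → ∀ i, γ.integral (ρ i) < ∞ := by
  obtain ⟨δ, hδ, hsum⟩ := ENNReal.exists_pos_tsum_mul_lt_of_countable (ε := 1) one_ne_zero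
    (fun i => ∫⁻ x, ρ i x ∂μ) (fun i => (hfin i).ne)
  refine ⟨fun x => ∑' i, ρ i x * δ i, Measurable.tsum fun i => (hρ i).mul_const _, ?_,
    fun γ hγ i => ?_⟩
  · rw [lintegral_tsum fun i => ((hρ i).mul_const _).aemeasurable]
    simp_rw [fun i => lintegral_mul_const (μ := μ) (δ i : ℝ≥0∞) (hρ i)]
    exact hsum.trans ENNReal.one_lt_top
  · have hle : γ.integral (ρ i) * δ i ≤ γ.integral fun x => ∑' i, ρ i x * δ i := by
      rw [← γ.integral_mul_const (hρ i)]
      exact γ.integral_mono fun x => ENNReal.le_tsum (f := fun i => ρ i x * δ i) i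
    exact ENNReal.lt_top_of_mul_ne_top_left (hle.trans_lt hγ).ne
      (ENNReal.coe_ne_zero.2 (hδ i).ne')

/-- `g` bounds the derivative of `u` along almost every curve in `Ω`, the exceptional curves being
those along which some integrable `ρ` has infinite integral. Unlike `IsWeakUpperGradientOn`, this
condition is pointwise in the curve parameter, so it passes to infima and obeys a Leibniz rule. -/
def DerivBoundedOn (μ : Measure X) (u : X → ℝ) (Ω : Set X) (g : X → ℝ≥0∞) : Prop :=
  Measurable g ∧ ∃ ρ : X → ℝ≥0∞, Measurable ρ ∧ ∫⁻ x, ρ x ∂μ < ∞ ∧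
    ∀ γ : Curve X, γ.In Ω → γ.integral ρ < ∞ →
      ∀ᵐ t ∂(volume.restrict (Icc 0 γ.len)),
        ENNReal.ofReal |deriv (u ∘ γ.extend) t| ≤ g (γ.extend t)

variable {μ : Measure X} {u : X → ℝ} {Ω : Set X}

omit [BorelSpace X] in
lemma DerivBoundedOn.isWeakUpperGradientOn {g : X → ℝ≥0∞} (hg : DerivBoundedOn μ u Ω g)
    (hu : LocLipOn u Ω) : IsWeakUpperGradientOn μ u g Ω := by
  obtain ⟨hg_meas, ρ, hρ, hρ_fin, hderiv⟩ := hg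
  refine ⟨hg_meas.aemeasurable, ρ, hρ, hρ_fin, fun γ hγ => ?_⟩
  by_contra hne
  exact hγ.2 (hu.ugIneq_of_ae_abs_deriv_le hγ.1 (hderiv γ hγ.1 (lt_top_iff_ne_top.2 hne)))

lemma DerivBoundedOn.iInf {ι : Type*} [Countable ι] {g : ι → X → ℝ≥0∞}
    (hg : ∀ i, DerivBoundedOn μ u Ω (g i)) : DerivBoundedOn μ u Ω (fun x => ⨅ i, g i x) := by
  choose hg_meas ρ hρ hρ_fin hderiv using hg
  obtain ⟨σ, hσ, hσ_fin, hσρ⟩ :=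
    exists_lintegral_lt_top_forall_curve_integral_lt_top ρ hρ hρ_fin
  refine ⟨Measurable.iInf hg_meas, σ, hσ, hσ_fin, fun γ hγ hγσ => ?_⟩
  filter_upwards [ae_all_iff.2 fun i => hderiv i γ hγ (hσρ γ hγσ i)] with t ht
  exact le_iInf ht

lemma DerivBoundedOn.inf {g h : X → ℝ≥0∞} (hg : DerivBoundedOn μ u Ω g)
    (hh : DerivBoundedOn μ u Ω h) : DerivBoundedOn μ u Ω (fun x => g x ⊓ h x) := by
  have hinf := DerivBoundedOn.iInf (g := fun b : Bool => cond b g h)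
    (Bool.forall_bool.2 ⟨hh, hg⟩)
  simpa only [iInf_bool_eq, cond_true, cond_false] using hinf

lemma derivBoundedOn_of_forall_ugIneq (hΩ : IsOpen Ω) {g : X → ℝ≥0∞} (hg : Measurable g)
    (hfin : ∫⁻ x in Ω, g x ∂μ < ∞) (hug : ∀ γ : Curve X, γ.In Ω → UGIneq u g γ) :
    DerivBoundedOn μ u Ω g := by
  refine ⟨hg, Ω.indicator g, hg.indicator hΩ.measurableSet, ?_, fun γ hγ hγ_fin => ?_⟩
  · rwa [lintegral_indicator hΩ.measurableSet]
  · have hγ_eq : γ.integral (Ω.indicator g) = γ.integral g :=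
      setLIntegral_congr_fun measurableSet_Icc fun t ht => indicator_of_mem (hγ t ht) g
    exact Curve.ae_abs_deriv_le_of_ugIneq hγ hg (fun γ hγ _ => hug γ hγ) hγ_fin (hγ_eq ▸ hγ_fin)

lemma LIntegrableLocOn.exists_forall_curve_integral_lt_top [SecondCountableTopology X]
    {g : X → ℝ≥0∞} (hloc : LIntegrableLocOn μ g Ω) (hg : Measurable g) (hΩ : IsOpen Ω) :
    ∃ σ : X → ℝ≥0∞, Measurable σ ∧ ∫⁻ x, σ x ∂μ < ∞ ∧
      ∀ γ : Curve X, γ.In Ω → γ.integral σ < ∞ → γ.integral g < ∞ := by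
  choose! r hr hr_fin using hloc
  have hmeas : ∀ x, MeasurableSet (Ω ∩ ball x (r x)) :=
    fun x => hΩ.measurableSet.inter measurableSet_ball
  obtain ⟨s, hsΩ, hs, hcover⟩ := TopologicalSpace.countable_cover_nhdsWithin
    (f := fun x => ball x (r x)) (s := Ω)
    (fun x hx => mem_nhdsWithin_of_mem_nhds (ball_mem_nhds x (hr x hx)))
  have := hs.to_subtype
  obtain ⟨σ, hσ, hσ_fin, hσρ⟩ := exists_lintegral_lt_top_forall_curve_integral_lt_top (μ := μ)
    (fun x : s => (Ω ∩ ball (x : X) (r x)).indicator g) (fun x => hg.indicator (hmeas x))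
    (fun x => by
      rw [lintegral_indicator (hmeas x)]
      exact hr_fin x (hsΩ x.2))
  refine ⟨σ, hσ, hσ_fin, fun γ hγ hγσ => γ.integral_lt_top_of_locally fun t => ?_⟩
  obtain ⟨x, hxs, hx⟩ := mem_iUnion₂.1 (hcover (hγ.extend_mem t))
  exact ⟨Ω ∩ ball x (r x), hΩ.inter isOpen_ball, ⟨hγ.extend_mem t, hx⟩, hσρ γ hγσ ⟨x, hxs⟩⟩

lemma IsWeakUpperGradientOn.exists_derivBoundedOn_ae_eq [SecondCountableTopology X]
    {g : X → ℝ≥0∞} (hΩ : IsOpen Ω) (hg : IsWeakUpperGradientOn μ u g Ω)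
    (hloc : LIntegrableLocOn μ g Ω) : ∃ g', DerivBoundedOn μ u Ω g' ∧ g' =ᵐ[μ] g := by
  obtain ⟨hg_meas, ρ, hρ, hρ_fin, hρ_top⟩ := hg
  obtain ⟨g', hg', hle, heq⟩ := exists_measurable_ge_ae_eq hg_meas
  have hloc' : LIntegrableLocOn μ g' Ω := fun x hx => by
    obtain ⟨r, hr, hfin⟩ := hloc x hx
    exact ⟨r, hr, (lintegral_congr_ae (ae_restrict_of_ae heq)).trans_lt hfin⟩
  obtain ⟨σ, hσ, hσ_fin, hσg⟩ := hloc'.exists_forall_curve_integral_lt_top hg' hΩ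
  refine ⟨g', ⟨hg', ρ + σ, hρ.add hσ, ?_, fun γ hγ hγ_fin => ?_⟩, heq⟩
  · simp only [Pi.add_apply, lintegral_add_left hρ, ENNReal.add_lt_top]
    exact ⟨hρ_fin, hσ_fin⟩
  · have hγρ : γ.integral ρ < ∞ := (γ.integral_mono fun x => le_self_add).trans_lt hγ_fin
    have hγσ : γ.integral σ < ∞ := (γ.integral_mono fun x => le_add_self).trans_lt hγ_fin
    refine Curve.ae_abs_deriv_le_of_ugIneq hγ hg' (fun γ' hγ' hγ'_fin => ?_) hγρ (hσg γ hγ hγσ)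
    by_contra hnot
    exact hγ'_fin.ne (hρ_top γ' ⟨hγ', fun hug => hnot (hug.mono hle)⟩)

end AlmostEveryCurve

section TotalVariation

variable {μ : Measure X} {u : X → ℝ} {Ω : Set X}

lemma exists_derivBoundedOn_forall_lintegral_le (μ : Measure X) (u : X → ℝ) (Ω : Set X) :
    ∃ g, DerivBoundedOn μ u Ω g ∧
      ∀ k, DerivBoundedOn μ u Ω k → ∫⁻ x in Ω, g x ∂μ ≤ ∫⁻ x in Ω, k x ∂μ := by
  let S : Set ℝ≥0∞ := (fun g => ∫⁻ x in Ω, g x ∂μ) '' {g | DerivBoundedOn μ u Ω g}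
  have hS : S.Nonempty :=
    ⟨_, fun _ => ∞, ⟨measurable_const, 0, measurable_const, by simp, by simp⟩, rfl⟩
  obtain ⟨a, -, ha, haS⟩ := exists_seq_tendsto_sInf hS (OrderBot.bddBelow S)
  choose G hG hGa using haS
  refine ⟨fun x => ⨅ i, G i x, DerivBoundedOn.iInf hG,
    fun k hk => le_trans (ge_of_tendsto' ha fun n => ?_) (sInf_le ⟨k, hk, rfl⟩)⟩
  rw [← hGa n]
  exact lintegral_mono fun x => iInf_le _ n

lemma exists_isMinimalWUG_lintegral_le [SecondCountableTopology X] (hΩ : IsOpen Ω)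
    (hu : LocLipOn u Ω) {h : X → ℝ≥0∞} (hh : IsWeakUpperGradientOn μ u h Ω)
    (hfin : ∫⁻ x in Ω, h x ∂μ < ∞) :
    ∃ g, IsMinimalWUG μ u g Ω ∧ ∫⁻ x in Ω, g x ∂μ ≤ ∫⁻ x in Ω, h x ∂μ := by
  have hloc : LIntegrableLocOn μ h Ω :=
    fun x _ => ⟨1, one_pos, (lintegral_mono_set inter_subset_left).trans_lt hfin⟩
  obtain ⟨h', hh', heq⟩ := hh.exists_derivBoundedOn_ae_eq hΩ hloc
  obtain ⟨g, hg, hg_min⟩ := exists_derivBoundedOn_forall_lintegral_le μ u Ω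
  have hgh : ∫⁻ x in Ω, g x ∂μ ≤ ∫⁻ x in Ω, h x ∂μ :=
    (hg_min h' hh').trans_eq (lintegral_congr_ae (ae_restrict_of_ae heq))
  refine ⟨g, ⟨hg.isWeakUpperGradientOn hu, fun k hk hk_loc => ?_⟩, hgh⟩
  obtain ⟨k', hk', hk_eq⟩ := hk.exists_derivBoundedOn_ae_eq hΩ hk_loc
  have hinf_le : ∀ x, g x ⊓ k' x ≤ g x := fun x => inf_le_left
  have hinf_eq : (fun x => g x ⊓ k' x) =ᵐ[μ.restrict Ω] g :=
    ae_eq_of_ae_le_of_lintegral_le (ae_of_all _ hinf_le)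
      (ne_top_of_le_ne_top (hgh.trans_lt hfin).ne (lintegral_mono hinf_le))
      hg.1.aemeasurable (hg_min _ (hg.inf hk'))
  filter_upwards [hinf_eq, ae_restrict_of_ae hk_eq] with x hx hkx
  rw [← hx, ← hkx]
  exact inf_le_right

lemma tvOpen_le_of_forall_lintegral_le [SecondCountableTopology X] (hΩ : IsOpen Ω)
    {v : ℕ → X → ℝ} {h : ℕ → X → ℝ≥0∞} (hv : ∀ n, LocLipOn (v n) Ω)
    (hh : ∀ n, IsWeakUpperGradientOn μ (v n) (h n) Ω) (hconv : L1LocConv μ Ω v u)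
    {c : ℝ≥0∞} (hc : c < ∞) (hle : ∀ n, ∫⁻ x in Ω, h n x ∂μ ≤ c) : tvOpen μ Ω u ≤ c := by
  choose g hg hgh using
    fun n => exists_isMinimalWUG_lintegral_le hΩ (hv n) (hh n) ((hle n).trans_lt hc)
  refine iInf_le_of_le v (iInf_le_of_le g (iInf_le_of_le hv (iInf_le_of_le hg
    (iInf_le_of_le hconv ?_))))
  refine liminf_le_of_le (by isBoundedDefault) fun b hb => ?_
  obtain ⟨n, hn⟩ := hb.exists
  exact hn.trans ((hgh n).trans (hle n))

end TotalVariation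

section Approximation

lemma abs_max_zero_min_one_sub_le (a b : ℝ) :
    |max 0 (min 1 a) - max 0 (min 1 b)| ≤ |a - b| := by
  simpa only [coe_projIcc] using abs_projIcc_sub_projIcc (zero_le_one' ℝ) (c := a) (d := b)

/-- A sequence `v` of locally Lipschitz functions `Ω → [0, 1]` converging to `χ_E` in `L¹_loc(Ω)`,
together with Borel upper gradients `g i` of `v i` along every curve of `Ω` whose integrals stay
below `c`. It witnesses `P(E, Ω) < c`. -/
structure PerimApprox (μ : Measure X) (Ω E : Set X) (c : ℝ≥0∞) (v : ℕ → X → ℝ)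
    (g : ℕ → X → ℝ≥0∞) : Prop where
  locLipOn : ∀ i, LocLipOn (v i) Ω
  nonneg : ∀ i x, 0 ≤ v i x
  le_one : ∀ i x, v i x ≤ 1
  measurable : ∀ i, Measurable (g i)
  ugIneq : ∀ i (γ : Curve X), γ.In Ω → UGIneq (v i) (g i) γ
  l1LocConv : L1LocConv μ Ω v (E.indicator fun _ => (1 : ℝ))
  lintegral_lt : ∀ i, ∫⁻ x in Ω, g i x ∂μ < c

lemma IsWeakUpperGradientOn.exists_forall_ugIneq_lintegral_lt {μ : Measure X} {Ω : Set X}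
    {u : X → ℝ} {g : X → ℝ≥0∞} {c : ℝ≥0∞} (hg : IsWeakUpperGradientOn μ u g Ω)
    (hlt : ∫⁻ x in Ω, g x ∂μ < c) :
    ∃ k : X → ℝ≥0∞, Measurable k ∧ (∀ γ : Curve X, γ.In Ω → UGIneq u k γ) ∧
      ∫⁻ x in Ω, k x ∂μ < c := by
  obtain ⟨hg_meas, ρ, hρ, hρ_fin, hρ_top⟩ := hg
  obtain ⟨g', hg', hle, heq⟩ := exists_measurable_ge_ae_eq hg_meas
  have hlt' : ∫⁻ x in Ω, g' x ∂μ < c :=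
    (lintegral_congr_ae (ae_restrict_of_ae heq)).trans_lt hlt
  obtain ⟨δ, hδ, hδ_lt⟩ :=
    ENNReal.exists_nnreal_pos_mul_lt hρ_fin.ne (tsub_pos_of_lt hlt').ne'
  refine ⟨fun x => g' x + ρ x * δ, hg'.add (hρ.mul_const _), fun γ hγ => ?_, ?_⟩
  · by_cases hug : UGIneq u g γ
    · exact hug.mono fun x => (hle x).trans le_self_add
    · have htop : γ.integral (fun x => ρ x * δ) = ∞ := by
        rw [γ.integral_mul_const hρ, hρ_top γ ⟨hγ, hug⟩,
          ENNReal.top_mul (ENNReal.coe_ne_zero.2 hδ.ne')]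
      exact (le_top.trans_eq htop.symm).trans (γ.integral_mono fun x => le_add_self)
  · rw [lintegral_add_left hg', lintegral_mul_const _ hρ, add_comm, mul_comm]
    refine lt_tsub_iff_right.1 (lt_of_le_of_lt ?_ hδ_lt)
    gcongr
    exact Measure.restrict_le_self

lemma exists_perimApprox {μ : Measure X} {Ω E : Set X} {c : ℝ≥0∞} (hlt : perimOpen μ E Ω < c) :
    ∃ v g, PerimApprox μ Ω E c v g := by
  simp only [perimOpen, tvOpen, iInf_lt_iff] at hlt
  obtain ⟨v, g, hv, hg, hconv, hliminf⟩ := hlt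
  obtain ⟨φ, hφ, hφ_lt⟩ := extraction_of_frequently_atTop
    (frequently_lt_of_liminf_lt (by isBoundedDefault) hliminf)
  choose k hk hk_ug hk_lt using
    fun i => (hg (φ i)).1.exists_forall_ugIneq_lintegral_lt (hφ_lt i)
  let clamp : ℝ → ℝ := fun a => max 0 (min 1 a)
  have hclamp : ∀ a b, |clamp a - clamp b| ≤ |a - b| := abs_max_zero_min_one_sub_le
  have hclamp_indicator : ∀ y, clamp (E.indicator (fun _ => (1 : ℝ)) y) =
      E.indicator (fun _ => (1 : ℝ)) y := fun y => by by_cases hy : y ∈ E <;> simp [clamp, hy]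
  refine ⟨fun i x => clamp (v (φ i) x), k, fun i => (hv (φ i)).of_abs_sub_le fun _ _ => hclamp _ _,
    fun i x => le_max_left _ _, fun i x => max_le zero_le_one (min_le_left _ _), hk,
    fun i γ hγ => (ENNReal.ofReal_le_ofReal (hclamp _ _)).trans (hk_ug i γ hγ),
    fun x hx => ?_, hk_lt⟩
  obtain ⟨r, hr, hr_lim⟩ := hconv x hx
  refine ⟨r, hr, tendsto_of_tendsto_of_tendsto_of_le_of_le tendsto_const_nhds
    (hr_lim.comp hφ.tendsto_atTop) (fun _ => zero_le) fun i =>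
      lintegral_mono fun y => ENNReal.ofReal_le_ofReal ?_⟩
  simpa only [hclamp_indicator] using hclamp (v (φ i) y) (E.indicator (fun _ => (1 : ℝ)) y)

end Approximation

section Tent

omit [MeasurableSpace X] [BorelSpace X]

/-- The tent over `B(c, ρ)`: equal to `1` on `B(c, ρ)`, to `0` off `B(c, 2ρ)`, and
`1/ρ`-Lipschitz. -/
def tent (c : X) (ρ : ℝ) (x : X) : ℝ := max 0 (min 1 (2 - dist x c / ρ))

lemma tent_nonneg (c : X) (ρ : ℝ) (x : X) : 0 ≤ tent c ρ x := le_max_left _ _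

lemma tent_le_one (c : X) (ρ : ℝ) (x : X) : tent c ρ x ≤ 1 := max_le zero_le_one (min_le_left _ _)

lemma tent_eq_one {c : X} {ρ : ℝ} (hρ : 0 < ρ) {x : X} (hx : x ∈ ball c ρ) : tent c ρ x = 1 := by
  have hdist : dist x c / ρ ≤ 1 := (div_le_one hρ).2 (mem_ball.1 hx).le
  rw [tent, min_eq_left (by linarith), max_eq_right zero_le_one]

lemma tent_eq_zero {c : X} {ρ : ℝ} (hρ : 0 < ρ) {x : X} (hx : x ∉ ball c (2 * ρ)) :
    tent c ρ x = 0 := by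
  have hdist : 2 ≤ dist x c / ρ := (le_div_iff₀ hρ).2 (not_lt.1 hx)
  exact max_eq_left ((min_le_right _ _).trans (by linarith))

lemma lipschitzWith_tent (c : X) {ρ : ℝ} (hρ : 0 < ρ) :
    LipschitzWith (Real.toNNReal (1 / ρ)) (tent c ρ) := by
  refine LipschitzWith.of_dist_le_mul fun x y => (abs_max_zero_min_one_sub_le _ _).trans ?_
  have hpos : 0 < 1 / ρ := one_div_pos.2 hρ
  calc |2 - dist x c / ρ - (2 - dist y c / ρ)|
      = 1 / ρ * |dist y c - dist x c| := by
        rw [show 2 - dist x c / ρ - (2 - dist y c / ρ) = 1 / ρ * (dist y c - dist x c) by ring,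
          abs_mul, abs_of_pos hpos]
    _ ≤ Real.toNNReal (1 / ρ) * dist x y := by
        rw [Real.coe_toNNReal _ hpos.le, dist_comm x y]
        gcongr
        exact abs_dist_sub_le _ _ _

lemma ofReal_abs_deriv_tent_comp_extend_le (c : X) {ρ : ℝ} (hρ : 0 < ρ) (γ : Curve X) (t : ℝ) :
    ENNReal.ofReal |deriv (tent c ρ ∘ γ.extend) t| ≤
      (ball c (2 * ρ)).indicator (fun _ => ENNReal.ofReal (1 / ρ)) (γ.extend t) := by
  by_cases ht : γ.extend t ∈ ball c (2 * ρ)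
  · rw [indicator_of_mem ht]
    refine ENNReal.ofReal_le_ofReal ?_
    have hlip := (lipschitzWith_tent c hρ).comp γ.lipschitzWith_extend
    rw [mul_one] at hlip
    simpa only [Real.coe_toNNReal _ (one_div_pos.2 hρ).le, Real.norm_eq_abs] using
      norm_deriv_le_of_lipschitz (x₀ := t) hlip
  · have hmin : IsLocalMin (tent c ρ ∘ γ.extend) t := Eventually.of_forall fun s => by
      simpa only [Function.comp_apply, tent_eq_zero hρ ht] using tent_nonneg _ _ _
    simp [hmin.deriv_eq_zero]

lemma ugIneq_tent (c : X) {ρ : ℝ} (hρ : 0 < ρ) (γ : Curve X) :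
    UGIneq (tent c ρ) ((ball c (2 * ρ)).indicator fun _ => ENNReal.ofReal (1 / ρ)) γ :=
  (locLipOn_of_lipschitzWith (lipschitzWith_tent c hρ) univ).ugIneq_of_ae_abs_deriv_le
    (fun _ _ => mem_univ _) (ae_of_all _ fun t => ofReal_abs_deriv_tent_comp_extend_le c hρ γ t)

end Tent

section Capacity

omit [MeasurableSpace X] [BorelSpace X] in
lemma ugIneq_iSup {ι : Type*} {u : ι → X → ℝ} {f : ι → X → ℝ≥0∞} {γ : Curve X}
    (hbdd : ∀ x, BddAbove (range fun i => u i x)) (hug : ∀ i, UGIneq (u i) (f i) γ) :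
    UGIneq (fun x => ⨆ i, u i x) (fun x => ∑' i, f i x) γ := by
  rcases isEmpty_or_nonempty ι with hι | hι
  · simp [UGIneq]
  by_cases hγ : γ.integral (fun x => ∑' i, f i x) = ∞
  · exact le_top.trans_eq hγ.symm
  rw [UGIneq, ENNReal.ofReal_le_iff_le_toReal hγ]
  set D := (γ.integral fun x => ∑' i, f i x).toReal
  have habs : ∀ i, |u i (γ.toFun 0) - u i (γ.toFun γ.len)| ≤ D := fun i => by
    rw [← ENNReal.ofReal_le_iff_le_toReal hγ]
    exact (hug i).mono fun x => ENNReal.le_tsum (f := fun i => f i x) i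
  have hsup : ∀ x y, (∀ i, |u i x - u i y| ≤ D) → ⨆ i, u i x ≤ (⨆ i, u i y) + D :=
    fun x y hxy => ciSup_le fun i => by linarith [(abs_le.1 (hxy i)).2, le_ciSup (hbdd y) i]
  rw [abs_sub_le_iff]
  constructor
  · linarith [hsup _ _ habs]
  · linarith [hsup _ _ fun i => (abs_sub_comm _ _).trans_le (habs i)]

omit [BorelSpace X] in
lemma IsUpperGradient.nnorm_univ_le {μ : Measure X} {u : X → ℝ} {g : X → ℝ≥0∞}
    (hg : IsUpperGradient u g) :
    NNorm μ univ u ≤ ∫⁻ x, ENNReal.ofReal |u x| ∂μ + ∫⁻ x, g x ∂μ := by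
  have hweak : IsWeakUpperGradientOn μ u g univ :=
    ⟨hg.1.aemeasurable, 0, measurable_const, by simp, fun γ hγ => absurd (hg.2 γ) hγ.2⟩
  rw [NNorm, Measure.restrict_univ]
  gcongr
  exact iInf₂_le g hweak

omit [BorelSpace X] in
lemma capa1_le_of_nnorm_le {μ : Measure X} {G : Set X} {u : X → ℝ} {c : ℝ≥0∞}
    (hu : NNorm μ univ u ≤ c) (huG : ∀ x ∈ G, 1 ≤ u x) : capa1 μ G ≤ c := by
  rcases eq_top_or_lt_top c with rfl | hc
  · exact le_top
  · exact iInf_le_of_le u (iInf_le_of_le (hu.trans_lt hc) (iInf_le_of_le huG hu))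

omit [MeasurableSpace X] [BorelSpace X] in
lemma bddAbove_range_tent {ι : Type*} (c : ι → X) (ρ : ι → ℝ) (x : X) :
    BddAbove (range fun i => tent (c i) (ρ i) x) :=
  ⟨1, by rintro _ ⟨i, rfl⟩; exact tent_le_one _ _ _⟩

lemma lintegral_iSup_tent_le {μ : Measure X} {ι : Type*} [Countable ι] (c : ι → X) {ρ : ι → ℝ}
    (hρ : ∀ i, 0 < ρ i) :
    ∫⁻ x, ENNReal.ofReal |⨆ i, tent (c i) (ρ i) x| ∂μ ≤ ∑' i, μ (ball (c i) (2 * ρ i)) := by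
  have hle_one : ∀ x, ⨆ i, tent (c i) (ρ i) x ≤ 1 :=
    fun x => Real.iSup_le (fun i => tent_le_one _ _ _) zero_le_one
  calc ∫⁻ x, ENNReal.ofReal |⨆ i, tent (c i) (ρ i) x| ∂μ
      ≤ ∫⁻ x, ∑' i, (ball (c i) (2 * ρ i)).indicator 1 x ∂μ := by
        refine lintegral_mono fun x => ?_
        rw [abs_of_nonneg (Real.iSup_nonneg fun i => tent_nonneg _ _ _)]
        by_cases hx : ∃ i, x ∈ ball (c i) (2 * ρ i)
        · obtain ⟨i, hi⟩ := hx
          refine le_trans ?_ (ENNReal.le_tsum i)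
          simpa only [indicator_of_mem hi, Pi.one_apply, ENNReal.ofReal_le_one] using hle_one x
        · push Not at hx
          simp [fun i => tent_eq_zero (hρ i) (hx i)]
    _ = ∑' i, μ (ball (c i) (2 * ρ i)) := by
        rw [lintegral_tsum fun i => (measurable_one.indicator measurableSet_ball).aemeasurable]
        simp only [lintegral_indicator_one measurableSet_ball]

lemma capa1_le_tsum_measure_ball {μ : Measure X} {ι : Type*} [Countable ι] (c : ι → X)
    {ρ : ι → ℝ} (hρ : ∀ i, 0 < ρ i) {G : Set X} (hG : G ⊆ ⋃ i, ball (c i) (ρ i)) :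
    capa1 μ G ≤ ∑' i, μ (ball (c i) (2 * ρ i)) * (1 + ENNReal.ofReal (1 / ρ i)) := by
  let f : ι → X → ℝ≥0∞ :=
    fun i => (ball (c i) (2 * ρ i)).indicator fun _ => ENNReal.ofReal (1 / ρ i)
  have hf : ∀ i, Measurable (f i) := fun i => measurable_const.indicator measurableSet_ball
  have hug : IsUpperGradient (fun x => ⨆ i, tent (c i) (ρ i) x) (fun x => ∑' i, f i x) :=
    ⟨Measurable.tsum hf, fun γ =>
      ugIneq_iSup (bddAbove_range_tent c ρ) fun i => ugIneq_tent (c i) (hρ i) γ⟩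
  refine capa1_le_of_nnorm_le (u := fun x => ⨆ i, tent (c i) (ρ i) x)
    (hug.nnorm_univ_le.trans ?_) fun x hx => ?_
  · simp only [mul_add, mul_one]
    rw [ENNReal.tsum_add, lintegral_tsum fun i => (hf i).aemeasurable]
    refine add_le_add (lintegral_iSup_tent_le c hρ) (ENNReal.tsum_le_tsum fun i => ?_)
    rw [lintegral_indicator_const measurableSet_ball, mul_comm]
  · obtain ⟨i, hi⟩ := mem_iUnion.1 (hG hx)
    rw [← tent_eq_one (hρ i) hi]
    exact le_ciSup (bddAbove_range_tent c ρ x) i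

end Capacity

section Cutoff

lemma abs_deriv_mul_one_sub_le {f e : ℝ → ℝ} {t : ℝ} (hf : DifferentiableAt ℝ f t)
    (he : DifferentiableAt ℝ e t) (het : e t ∈ Icc 0 1) :
    |deriv (fun s => f s * (1 - e s)) t| ≤ |deriv f t| * (1 - e t) + |f t| * |deriv e t| := by
  have hderiv : HasDerivAt (fun s => f s * (1 - e s))
      (deriv f t * (1 - e t) + f t * (-deriv e t)) t :=
    hf.hasDerivAt.mul (he.hasDerivAt.const_sub 1)
  rw [hderiv.deriv]
  refine (abs_add_le _ _).trans_eq ?_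
  rw [abs_mul, abs_mul, abs_neg, abs_of_nonneg (sub_nonneg.2 het.2)]

lemma DerivBoundedOn.mul_one_sub {μ : Measure X} {Ω A : Set X} {v η : X → ℝ} {g G : X → ℝ≥0∞}
    (hΩ : IsOpen Ω) (hv : LocLipOn v Ω) (hg : DerivBoundedOn μ v Ω g) (hη : LocLipOn η Ω)
    (hη_mem : ∀ x, η x ∈ Icc 0 1) (hG : DerivBoundedOn μ η Ω G) (hA : MeasurableSet A)
    (hηA : ∀ x ∈ A, η x = 1) :
    DerivBoundedOn μ (fun x => v x * (1 - η x)) Ω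
      (fun x => Aᶜ.indicator g x + ENNReal.ofReal |Ω.indicator v x| * G x) := by
  obtain ⟨hg_meas, ρ, hρ, hρ_fin, hderiv_v⟩ := hg
  obtain ⟨hG_meas, σ, hσ, hσ_fin, hderiv_η⟩ := hG
  refine ⟨(hg_meas.indicator hA.compl).add
    ((hv.measurable_indicator hΩ).abs.ennreal_ofReal.mul hG_meas), ρ + σ, hρ.add hσ, ?_,
    fun γ hγ hγ_fin => ?_⟩
  · simp only [Pi.add_apply, lintegral_add_left hρ, ENNReal.add_lt_top]
    exact ⟨hρ_fin, hσ_fin⟩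
  have hγρ : γ.integral ρ < ∞ := (γ.integral_mono fun x => le_self_add).trans_lt hγ_fin
  have hγσ : γ.integral σ < ∞ := (γ.integral_mono fun x => le_add_self).trans_lt hγ_fin
  filter_upwards [hderiv_v γ hγ hγρ, hderiv_η γ hγ hγσ, hv.ae_differentiableAt_comp_extend hγ,
    hη.ae_differentiableAt_comp_extend hγ] with t hvt hηt hv_diff hη_diff
  have hmem := hη_mem (γ.extend t)
  refine (ENNReal.ofReal_le_ofReal (abs_deriv_mul_one_sub_le hv_diff hη_diff hmem)).trans
    (ENNReal.ofReal_add_le.trans (add_le_add ?_ ?_))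
  · by_cases hAt : γ.extend t ∈ A
    · simp [hηA _ hAt]
    · rw [indicator_of_mem (show γ.extend t ∈ Aᶜ from hAt)]
      refine le_trans (ENNReal.ofReal_le_ofReal ?_) hvt
      exact mul_le_of_le_one_right (abs_nonneg _) (sub_le_self _ hmem.1)
  · rw [indicator_of_mem (hγ.extend_mem t), ENNReal.ofReal_mul (abs_nonneg _)]
    exact mul_le_mul_right hηt _

variable {ι : Type*} {s : Finset ι} {c : ι → X} {ρ : ι → ℝ}

/-- The sum of the tents over a finite family of balls; it is a cutoff function with values in
`[0, 1]` when the doubled balls are disjoint. -/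
def tents (s : Finset ι) (c : ι → X) (ρ : ι → ℝ) (x : X) : ℝ :=
  ∑ i ∈ s, tent (c i) (ρ i) x

section

omit [MeasurableSpace X] [BorelSpace X]

lemma tents_eq_tent (hρ : ∀ i ∈ s, 0 < ρ i)
    (hd : (s : Set ι).PairwiseDisjoint fun i => ball (c i) (2 * ρ i)) {x : X} {i : ι} (hi : i ∈ s)
    (hx : x ∈ ball (c i) (2 * ρ i)) : tents s c ρ x = tent (c i) (ρ i) x :=
  Finset.sum_eq_single_of_mem i hi fun j hj hji =>
    tent_eq_zero (hρ j hj) fun hxj => disjoint_left.1 (hd hj hi hji) hxj hx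

lemma tents_eq_zero (hρ : ∀ i ∈ s, 0 < ρ i) {x : X} (hx : ∀ i ∈ s, x ∉ ball (c i) (2 * ρ i)) :
    tents s c ρ x = 0 :=
  Finset.sum_eq_zero fun i hi => tent_eq_zero (hρ i hi) (hx i hi)

lemma tents_eq_one (hρ : ∀ i ∈ s, 0 < ρ i)
    (hd : (s : Set ι).PairwiseDisjoint fun i => ball (c i) (2 * ρ i)) {x : X}
    (hx : x ∈ ⋃ i ∈ s, ball (c i) (ρ i)) : tents s c ρ x = 1 := by
  obtain ⟨i, hi, hxi⟩ := mem_iUnion₂.1 hx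
  have hρi := hρ i hi
  rw [tents_eq_tent hρ hd hi (ball_subset_ball (by linarith) hxi), tent_eq_one hρi hxi]

lemma tents_mem_Icc (hρ : ∀ i ∈ s, 0 < ρ i)
    (hd : (s : Set ι).PairwiseDisjoint fun i => ball (c i) (2 * ρ i)) (x : X) :
    tents s c ρ x ∈ Icc 0 1 := by
  by_cases hx : ∃ i ∈ s, x ∈ ball (c i) (2 * ρ i)
  · obtain ⟨i, hi, hxi⟩ := hx
    rw [tents_eq_tent hρ hd hi hxi]
    exact ⟨tent_nonneg _ _ _, tent_le_one _ _ _⟩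
  · push Not at hx
    rw [tents_eq_zero hρ hx]
    exact ⟨le_rfl, zero_le_one⟩

lemma lipschitzWith_tents (hρ : ∀ i ∈ s, 0 < ρ i) :
    LipschitzWith (∑ i ∈ s, Real.toNNReal (1 / ρ i)) (tents s c ρ) := by
  refine LipschitzWith.of_dist_le_mul fun x y => ?_
  rw [NNReal.coe_sum, Finset.sum_mul]
  exact (dist_sum_sum_le _ _ _).trans
    (Finset.sum_le_sum fun i hi => (lipschitzWith_tent (c i) (hρ i hi)).dist_le_mul x y)

lemma ofReal_abs_deriv_tents_comp_extend_le (hρ : ∀ i ∈ s, 0 < ρ i)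
    (hd : (s : Set ι).PairwiseDisjoint fun i => ball (c i) (2 * ρ i)) (γ : Curve X) (t : ℝ) :
    ENNReal.ofReal |deriv (tents s c ρ ∘ γ.extend) t| ≤
      ∑ i ∈ s, (ball (c i) (2 * ρ i)).indicator (fun _ => ENNReal.ofReal (1 / ρ i))
        (γ.extend t) := by
  by_cases ht : ∃ i ∈ s, γ.extend t ∈ ball (c i) (2 * ρ i)
  · obtain ⟨i, hi, hti⟩ := ht
    have heq : tents s c ρ ∘ γ.extend =ᶠ[𝓝 t] tent (c i) (ρ i) ∘ γ.extend := by
      filter_upwards [γ.continuous_extend.continuousAt.preimage_mem_nhds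
        (isOpen_ball.mem_nhds hti)] with y hy
      exact tents_eq_tent hρ hd hi hy
    rw [heq.deriv_eq]
    refine (ofReal_abs_deriv_tent_comp_extend_le (c i) (hρ i hi) γ t).trans ?_
    exact Finset.single_le_sum (f := fun i => (ball (c i) (2 * ρ i)).indicator
      (fun _ => ENNReal.ofReal (1 / ρ i)) (γ.extend t)) (fun _ _ => zero_le) hi
  · push Not at ht
    have hmin : IsLocalMin (tents s c ρ ∘ γ.extend) t := Eventually.of_forall fun y => by
      simpa only [Function.comp_apply, tents_eq_zero hρ ht] using (tents_mem_Icc hρ hd _).1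
    simp [hmin.deriv_eq_zero]

end

lemma derivBoundedOn_tents (μ : Measure X) (Ω : Set X) (hρ : ∀ i ∈ s, 0 < ρ i)
    (hd : (s : Set ι).PairwiseDisjoint fun i => ball (c i) (2 * ρ i)) :
    DerivBoundedOn μ (tents s c ρ) Ω
      (fun x => ∑ i ∈ s, (ball (c i) (2 * ρ i)).indicator
        (fun _ => ENNReal.ofReal (1 / ρ i)) x) :=
  ⟨Finset.measurable_fun_sum _ fun _ _ => measurable_const.indicator measurableSet_ball, 0,
    measurable_const, by simp,
    fun γ _ _ => ae_of_all _ fun t => ofReal_abs_deriv_tents_comp_extend_le hρ hd γ t⟩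

lemma setLIntegral_mul_sum_indicator_ball {μ : Measure X} {Ω : Set X} {V : X → ℝ≥0∞}
    (hV : Measurable V) (a : ι → ℝ≥0∞) :
    ∫⁻ x in Ω, V x * ∑ i ∈ s, (ball (c i) (ρ i)).indicator (fun _ => a i) x ∂μ =
      ∑ i ∈ s, a i * ∫⁻ x in Ω ∩ ball (c i) (ρ i), V x ∂μ := by
  have hterm : ∀ i x, V x * (ball (c i) (ρ i)).indicator (fun _ => a i) x =
      (ball (c i) (ρ i)).indicator (fun x => a i * V x) x := fun i x => by
    by_cases hx : x ∈ ball (c i) (ρ i) <;> simp [hx, mul_comm]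
  simp only [Finset.mul_sum, hterm]
  rw [lintegral_finsetSum _ fun i _ => (hV.const_mul _).indicator measurableSet_ball]
  refine Finset.sum_congr rfl fun i _ => ?_
  rw [setLIntegral_indicator measurableSet_ball, lintegral_const_mul _ hV, inter_comm]

-- The gradient of `v` is erased on the balls `B(c i, ρ i)`, at the price of `v / ρ i` on the
-- doubled balls.
lemma exists_isWeakUpperGradientOn_mul_one_sub_tents {μ : Measure X} {Ω : Set X} (hΩ : IsOpen Ω)
    {v : X → ℝ} {g : X → ℝ≥0∞} (hv : LocLipOn v Ω) (hv0 : ∀ x, 0 ≤ v x)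
    (hv1 : ∀ x, v x ≤ 1) (hg : DerivBoundedOn μ v Ω g) (hρ : ∀ i ∈ s, 0 < ρ i)
    (hd : (s : Set ι).PairwiseDisjoint fun i => ball (c i) (2 * ρ i)) :
    ∃ h, IsWeakUpperGradientOn μ (fun x => v x * (1 - tents s c ρ x)) h Ω ∧
      ∫⁻ x in Ω, h x ∂μ ≤ ∫⁻ x in Ω \ ⋃ i ∈ s, ball (c i) (ρ i), g x ∂μ +
        ∑ i ∈ s, ENNReal.ofReal (1 / ρ i) *
          ∫⁻ x in Ω ∩ ball (c i) (2 * ρ i), ENNReal.ofReal (v x) ∂μ := by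
  have hA : MeasurableSet (⋃ i ∈ s, ball (c i) (ρ i)) :=
    (isOpen_biUnion fun i _ => isOpen_ball).measurableSet
  have hcut : LocLipOn (fun x => v x * (1 - tents s c ρ x)) Ω :=
    hv.mul_one_sub (fun x => (abs_of_nonneg (hv0 x)).trans_le (hv1 x)) (lipschitzWith_tents hρ)
      (tents_mem_Icc hρ hd)
  refine ⟨_, (DerivBoundedOn.mul_one_sub hΩ hv hg
    (locLipOn_of_lipschitzWith (lipschitzWith_tents hρ) Ω) (tents_mem_Icc hρ hd)
    (derivBoundedOn_tents μ Ω hρ hd) hA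
    fun x hx => tents_eq_one hρ hd hx).isWeakUpperGradientOn hcut, ?_⟩
  rw [lintegral_add_left (hg.1.indicator hA.compl), setLIntegral_indicator hA.compl, inter_comm,
    ← sdiff_eq, setLIntegral_mul_sum_indicator_ball
      (hv.measurable_indicator hΩ).abs.ennreal_ofReal]
  refine add_le_add le_rfl (Finset.sum_le_sum fun i _ => mul_le_mul_right ?_ _)
  refine (setLIntegral_congr_fun (hΩ.measurableSet.inter measurableSet_ball) fun x hx => ?_).le
  simp only [indicator_of_mem hx.1, abs_of_nonneg (hv0 x)]

end Cutoff

/-- `E` and its complement both occupy at least the fraction `a` of the ball `B(x, s)`. On such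
balls the Poincaré inequality bounds the energy of approximations of `χ_E` from below. -/
structure BalancedBall (μ : Measure X) (E : Set X) (a : ℝ) (x : X) (s : ℝ) : Prop where
  le_measure_inter : ENNReal.ofReal a * μ (ball x s) ≤ μ (ball x s ∩ E)
  le_measure_diff : ENNReal.ofReal a * μ (ball x s) ≤ μ (ball x s \ E)

section DoublingMeasure

variable {μ : Measure X} {Cd : ℝ}

omit [BorelSpace X] in
lemma Doubling.measure_ball_lt_top (h : Doubling μ Cd) (x : X) (r : ℝ) : μ (ball x r) < ∞ := by
  rcases le_or_gt r 0 with hr | hr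
  · simp [ball_eq_empty.2 hr]
  · exact (h.2 x r hr).2.2

omit [BorelSpace X] in
lemma Doubling.measure_ball_pos (h : Doubling μ Cd) (x : X) {r : ℝ} (hr : 0 < r) :
    0 < μ (ball x r) := by
  simpa only [mul_div_cancel₀ r two_ne_zero] using (h.2 x (r / 2) (half_pos hr)).1

omit [BorelSpace X] in
lemma Doubling.measure_ball_le_half (h : Doubling μ Cd) (x : X) {r : ℝ} (hr : 0 < r) :
    μ (ball x r) ≤ ENNReal.ofReal Cd * μ (ball x (r / 2)) := by
  simpa only [mul_div_cancel₀ r two_ne_zero] using (h.2 x (r / 2) (half_pos hr)).2.1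

omit [BorelSpace X] in
lemma Doubling.measure_ball_two_pow_mul_le (h : Doubling μ Cd) (n : ℕ) (x : X) {r : ℝ}
    (hr : 0 < r) : μ (ball x (2 ^ n * r)) ≤ ENNReal.ofReal Cd ^ n * μ (ball x r) := by
  induction n with
  | zero => simp
  | succ n ih =>
    calc μ (ball x (2 ^ (n + 1) * r))
        ≤ ENNReal.ofReal Cd * μ (ball x (2 ^ n * r)) := by
          rw [pow_succ', mul_assoc]
          exact (h.2 x (2 ^ n * r) (by positivity)).2.1
      _ ≤ ENNReal.ofReal Cd ^ (n + 1) * μ (ball x r) := by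
          rw [pow_succ', mul_assoc]
          gcongr

omit [BorelSpace X] in
lemma Doubling.exists_measure_ball_mul_le (h : Doubling μ Cd) (K : ℝ) :
    ∃ C : ℝ≥0, 1 ≤ C ∧ ∀ (x : X) (r : ℝ), 0 < r → μ (ball x (K * r)) ≤ C * μ (ball x r) := by
  obtain ⟨n, hn⟩ := pow_unbounded_of_one_lt K one_lt_two
  refine ⟨Real.toNNReal Cd ^ n, one_le_pow₀ (Real.one_le_toNNReal.2 h.1), fun x r hr => ?_⟩
  exact (measure_mono (ball_subset_ball (by gcongr))).trans
    ((h.measure_ball_two_pow_mul_le n x hr).trans_eq (by rw [ENNReal.coe_pow]; rfl))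

omit [BorelSpace X] in
lemma Doubling.exists_pos_forall_le_measure_ball (h : Doubling μ Cd) (x : X) (r : ℝ) {ε : ℝ}
    (hε : 0 < ε) : ∃ m > 0, ∀ y ∈ closedBall x r, m ≤ μ (ball y ε) := by
  obtain ⟨C, hC1, hC⟩ := h.exists_measure_ball_mul_le ((r + ε) / ε)
  have hC0 : (C : ℝ≥0∞) ≠ 0 := ENNReal.coe_ne_zero.2 (one_pos.trans_le hC1).ne'
  refine ⟨μ (ball x ε) / C, ENNReal.div_pos (h.measure_ball_pos x hε).ne' ENNReal.coe_ne_top,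
    fun y hy => ?_⟩
  rw [ENNReal.div_le_iff hC0 ENNReal.coe_ne_top, mul_comm]
  refine (measure_mono (ball_subset_ball' ?_)).trans (hC y ε hε)
  rw [div_mul_cancel₀ _ hε.ne', dist_comm]
  linarith [mem_closedBall.1 hy]

lemma Doubling.not_exists_separated_seq (h : Doubling μ Cd) (x : X) (r : ℝ) {ε : ℝ} (hε : 0 < ε)
    {f : ℕ → X} (hf : ∀ n, f n ∈ closedBall x r) :
    ¬ Pairwise fun m n => ε ≤ dist (f m) (f n) := by
  intro hsep
  obtain ⟨m, hm, hle⟩ := h.exists_pos_forall_le_measure_ball x r (half_pos hε)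
  have hdisj : Pairwise (Function.onFun Disjoint fun n => ball (f n) (ε / 2)) :=
    fun i j hij => ball_disjoint_ball (by linarith [hsep hij])
  have hunion : μ (⋃ n, ball (f n) (ε / 2)) ≠ ∞ :=
    ne_top_of_le_ne_top (h.measure_ball_lt_top x (r + ε)).ne <| measure_mono <|
      iUnion_subset fun n => ball_subset_ball' (by linarith [mem_closedBall.1 (hf n)])
  have hfinite := Measure.finite_const_le_meas_of_disjoint_iUnion μ hm
    (fun _ => measurableSet_ball) hdisj hunion
  exact infinite_univ (hfinite.subset fun n _ => hle (f n) (hf n))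

lemma Doubling.totallyBounded_closedBall (h : Doubling μ Cd) (x : X) (r : ℝ) :
    TotallyBounded (closedBall x r) := by
  rw [Metric.totallyBounded_iff]
  intro ε hε
  by_contra! hcover
  have hextend : ∀ s : Finset X, (∀ y ∈ s, y ∈ closedBall x r) →
      ∃ y, y ∈ closedBall x r ∧ ∀ z ∈ s, ε ≤ dist z y := fun s _ => by
    obtain ⟨y, hy, hys⟩ := not_subset.1 (hcover s s.finite_toSet)
    refine ⟨y, hy, fun z hz => not_lt.1 fun hzy => hys (mem_biUnion hz ?_)⟩
    rwa [mem_ball, dist_comm]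
  obtain ⟨f, hf, hsep⟩ := exists_seq_of_forall_finset_exists _ _ hextend
  refine h.not_exists_separated_seq x r hε hf fun m n hmn => ?_
  rcases hmn.lt_or_gt with hlt | hlt
  · exact hsep m n hlt
  · exact (hsep n m hlt).trans_eq (dist_comm _ _)

lemma Doubling.properSpace [CompleteSpace X] (h : Doubling μ Cd) : ProperSpace X :=
  ⟨fun x r => (h.totallyBounded_closedBall x r).isCompact_of_isClosed isClosed_closedBall⟩

omit [BorelSpace X] in
lemma Doubling.isUnifLocDoublingMeasure (h : Doubling μ Cd) : IsUnifLocDoublingMeasure μ := by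
  obtain ⟨C, -, hC⟩ := h.exists_measure_ball_mul_le 4
  refine ⟨C, ?_⟩
  filter_upwards [self_mem_nhdsWithin] with ε (hε : 0 < ε) x
  calc μ (closedBall x (2 * ε))
      ≤ μ (ball x (4 * ε)) := measure_mono (closedBall_subset_ball (by linarith))
    _ ≤ C * μ (ball x ε) := hC x ε hε
    _ ≤ C * μ (closedBall x ε) := by gcongr; exact ball_subset_closedBall

omit [BorelSpace X] in
lemma Doubling.isLocallyFiniteMeasure (h : Doubling μ Cd) : IsLocallyFiniteMeasure μ :=
  ⟨fun x => ⟨ball x 1, ball_mem_nhds x one_pos, h.measure_ball_lt_top x 1⟩⟩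

omit [MeasurableSpace X] [BorelSpace X] in
lemma exists_countable_disjoint_closedBall_covering [SecondCountableTopology X] {ι : Type*}
    (t : Set ι) (x : ι → X) (r : ι → ℝ) (R : ℝ) (hr0 : ∀ a ∈ t, 0 < r a)
    (hr : ∀ a ∈ t, r a ≤ R) :
    ∃ u ⊆ t, u.Countable ∧ (u.PairwiseDisjoint fun a => closedBall (x a) (r a)) ∧
      ∀ a ∈ t, ∃ b ∈ u, closedBall (x a) (r a) ⊆ ball (x b) (6 * r b) := by
  obtain ⟨u, hut, hd, hcover⟩ := Vitali.exists_disjoint_subfamily_covering_enlargement_closedBall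
    t x r R hr 5 (by norm_num)
  refine ⟨u, hut, hd.countable_of_nonempty_interior fun i hi => ?_, hd, fun a ha => ?_⟩
  · exact ⟨x i, ball_subset_interior_closedBall (mem_ball_self (hr0 i (hut hi)))⟩
  · obtain ⟨b, hb, hsub⟩ := hcover a ha
    exact ⟨b, hb, hsub.trans (closedBall_subset_ball (by linarith [hr0 b (hut hb)]))⟩

lemma Doubling.ae_eventually_half_mul_le_measure_closedBall_inter [SecondCountableTopology X]
    (h : Doubling μ Cd) (E : Set X) :
    ∀ᵐ x ∂μ.restrict E, ∀ᶠ t in 𝓝[>] (0 : ℝ),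
      2⁻¹ * μ (closedBall x t) ≤ μ (closedBall x t ∩ E) := by
  have := h.isUnifLocDoublingMeasure
  have := h.isLocallyFiniteMeasure
  filter_upwards [IsUnifLocDoublingMeasure.ae_tendsto_measure_inter_div μ E 1] with x hx
  have hlim := hx (l := 𝓝[>] (0 : ℝ)) (fun _ => x) id tendsto_id (by
    filter_upwards [self_mem_nhdsWithin] with t (ht : 0 < t)
    simp [ht.le])
  filter_upwards [hlim.eventually (lt_mem_nhds ENNReal.one_half_lt_one), self_mem_nhdsWithin]
    with t hlt (ht : 0 < t)
  have hpos : μ (closedBall x t) ≠ 0 :=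
    ((h.measure_ball_pos x ht).trans_le (measure_mono ball_subset_closedBall)).ne'
  have hfin : μ (closedBall x t) ≠ ∞ := ne_top_of_le_ne_top (h.measure_ball_lt_top x (2 * t)).ne
    (measure_mono (closedBall_subset_ball (by linarith)))
  rw [inter_comm]
  exact ((ENNReal.lt_div_iff_mul_lt (Or.inl hpos) (Or.inl hfin)).1 hlt).le

lemma Doubling.ae_eventually_mul_measure_ball_le [SecondCountableTopology X]
    (h : Doubling μ Cd) (E : Set X) :
    ∀ᵐ x ∂μ.restrict E, ∀ᶠ t in 𝓝[>] (0 : ℝ),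
      ENNReal.ofReal (1 / (2 * Cd)) * μ (ball x t) ≤ μ (ball x t ∩ E) := by
  have hCd : 0 < Cd := one_pos.trans_le h.1
  have hhalf : Tendsto (fun t : ℝ => t / 2) (𝓝[>] 0) (𝓝[>] 0) :=
    tendsto_nhdsWithin_iff.2 ⟨(Continuous.tendsto' (by fun_prop) _ _ (by simp)).mono_left
      nhdsWithin_le_nhds, by
        filter_upwards [self_mem_nhdsWithin] with t ht using half_pos (mem_Ioi.1 ht)⟩
  filter_upwards [h.ae_eventually_half_mul_le_measure_closedBall_inter E] with x hx
  filter_upwards [hhalf.eventually hx, self_mem_nhdsWithin] with t hle (ht : 0 < t)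
  calc ENNReal.ofReal (1 / (2 * Cd)) * μ (ball x t)
      ≤ ENNReal.ofReal (1 / (2 * Cd)) * (ENNReal.ofReal Cd * μ (ball x (t / 2))) := by
        gcongr
        exact h.measure_ball_le_half x ht
    _ = 2⁻¹ * μ (ball x (t / 2)) := by
        rw [← mul_assoc, ← ENNReal.ofReal_mul (by positivity),
          show 1 / (2 * Cd) * Cd = 2⁻¹ by field_simp, ENNReal.ofReal_inv_of_pos two_pos,
          ENNReal.ofReal_ofNat]
    _ ≤ 2⁻¹ * μ (closedBall x (t / 2)) := by gcongr; exact ball_subset_closedBall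
    _ ≤ μ (closedBall x (t / 2) ∩ E) := hle
    _ ≤ μ (ball x t ∩ E) := by gcongr; exact closedBall_subset_ball (by linarith)

omit [MetricSpace X] [BorelSpace X] in
lemma half_mul_measure_le_measure_diff {A E : Set X} (hE : MeasurableSet E) (hA : μ A ≠ ∞)
    (hAE : μ (A ∩ E) ≤ 2⁻¹ * μ A) : 2⁻¹ * μ A ≤ μ (A \ E) := by
  refine ENNReal.le_of_add_le_add_left (a := 2⁻¹ * μ A) (by finiteness) ?_
  calc 2⁻¹ * μ A + 2⁻¹ * μ A = μ (A ∩ E) + μ (A \ E) := by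
        rw [← add_mul, ENNReal.inv_two_add_inv_two, one_mul, measure_inter_add_sdiff _ hE]
    _ ≤ 2⁻¹ * μ A + μ (A \ E) := by gcongr

omit [BorelSpace X] in
lemma exists_density_lt_and_density_half_ge {E : Set X} {x : X} {θ : ℝ≥0∞}
    (hx : ∀ᶠ t in 𝓝[>] (0 : ℝ), θ * μ (ball x t) ≤ μ (ball x t ∩ E)) {ρ : ℝ} (hρ : 0 < ρ)
    (hlt : μ (ball x ρ ∩ E) < θ * μ (ball x ρ)) :
    ∃ s, 0 < s ∧ s ≤ ρ ∧ μ (ball x s ∩ E) < θ * μ (ball x s) ∧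
      θ * μ (ball x (s / 2)) ≤ μ (ball x (s / 2) ∩ E) := by
  have hdyadic : Tendsto (fun k : ℕ => (1 / 2 : ℝ) ^ k * ρ) atTop (𝓝[>] 0) := by
    refine tendsto_nhdsWithin_iff.2 ⟨?_, Eventually.of_forall fun k => by
      simp only [mem_Ioi]; positivity⟩
    simpa using (tendsto_pow_atTop_nhds_zero_of_lt_one (by norm_num : (0 : ℝ) ≤ 1 / 2)
      (by norm_num)).mul_const ρ
  obtain ⟨m, hm, hm'⟩ := Nat.exists_not_and_succ_of_not_zero_of_exists
    (p := fun k => θ * μ (ball x ((1 / 2) ^ k * ρ)) ≤ μ (ball x ((1 / 2) ^ k * ρ) ∩ E))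
    (by simpa using hlt) (hdyadic.eventually hx).exists
  refine ⟨(1 / 2) ^ m * ρ, by positivity,
    mul_le_of_le_one_left hρ.le (pow_le_one₀ (by norm_num) (by norm_num)), not_le.1 hm, ?_⟩
  convert hm' using 4 <;> ring

omit [BorelSpace X] in
lemma Doubling.exists_balancedBall (h : Doubling μ Cd) {E : Set X} (hE : MeasurableSet E)
    {x : X} (hx : ∀ᶠ t in 𝓝[>] (0 : ℝ),
      ENNReal.ofReal (1 / (2 * Cd)) * μ (ball x t) ≤ μ (ball x t ∩ E)) {ρ : ℝ} (hρ : 0 < ρ)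
    (hlt : μ (ball x ρ ∩ E) < ENNReal.ofReal (1 / (2 * Cd)) * μ (ball x ρ)) :
    ∃ s, 0 < s ∧ s ≤ ρ ∧ BalancedBall μ E (1 / (2 * Cd ^ 2)) x s := by
  have hCd : 1 ≤ Cd := h.1
  have hle_half : ∀ C : ℝ, 1 ≤ C → ENNReal.ofReal (1 / (2 * C)) ≤ 2⁻¹ := fun C hC => by
    rw [← ENNReal.ofReal_ofNat 2, ← ENNReal.ofReal_inv_of_pos two_pos, ← one_div]
    exact ENNReal.ofReal_le_ofReal (one_div_le_one_div_of_le two_pos (by linarith))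
  obtain ⟨s, hs, hsρ, hbig, hsmall⟩ := exists_density_lt_and_density_half_ge hx hρ hlt
  refine ⟨s, hs, hsρ, ⟨?_, ?_⟩⟩
  · calc ENNReal.ofReal (1 / (2 * Cd ^ 2)) * μ (ball x s)
        ≤ ENNReal.ofReal (1 / (2 * Cd ^ 2)) * (ENNReal.ofReal Cd * μ (ball x (s / 2))) := by
          gcongr
          exact h.measure_ball_le_half x hs
      _ = ENNReal.ofReal (1 / (2 * Cd)) * μ (ball x (s / 2)) := by
          rw [← mul_assoc, ← ENNReal.ofReal_mul (by positivity),
            show 1 / (2 * Cd ^ 2) * Cd = 1 / (2 * Cd) by field_simp]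
      _ ≤ μ (ball x s ∩ E) := hsmall.trans (by gcongr; linarith)
  · refine le_trans ?_ (half_mul_measure_le_measure_diff hE (h.measure_ball_lt_top x s).ne
      (hbig.le.trans (mul_le_mul_left (hle_half Cd hCd) _)))
    exact mul_le_mul_left (hle_half _ (one_le_pow₀ hCd)) _

end DoublingMeasure

section LocalConvergence

variable {μ : Measure X} {Ω : Set X} {v : ℕ → X → ℝ} {u : X → ℝ}

omit [BorelSpace X] in
lemma L1LocConv.tendsto_setLIntegral_of_isCompact (h : L1LocConv μ Ω v u) {K : Set X}
    (hK : IsCompact K) (hKΩ : K ⊆ Ω) :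
    Tendsto (fun i => ∫⁻ y in K, ENNReal.ofReal |v i y - u y| ∂μ) atTop (𝓝 0) := by
  let p : Set X → Prop := fun s =>
    Tendsto (fun i => ∫⁻ y in s, ENNReal.ofReal |v i y - u y| ∂μ) atTop (𝓝 0)
  have hmono : ∀ ⦃s t : Set X⦄, s ⊆ t → p t → p s := fun s t hst ht =>
    tendsto_of_tendsto_of_tendsto_of_le_of_le tendsto_const_nhds ht (fun _ => zero_le)
      fun i => lintegral_mono_set hst
  have hunion : ∀ ⦃s t : Set X⦄, p s → p t → p (s ∪ t) := fun s t hs ht =>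
    tendsto_of_tendsto_of_tendsto_of_le_of_le tendsto_const_nhds
      (by simpa only [add_zero] using Tendsto.add hs ht) (fun _ => zero_le)
      fun i => lintegral_union_le _ _ _
  refine hK.induction_on (p := p) (by simp [p]) hmono hunion fun x hx => ?_
  obtain ⟨r, hr, hconv⟩ := h x (hKΩ hx)
  exact ⟨K ∩ ball x r, inter_mem_nhdsWithin K (ball_mem_nhds x hr),
    hmono (inter_subset_inter_left _ hKΩ) hconv⟩

end LocalConvergence

section PoincareInequality

variable {μ : Measure X} {Cd CP lam : ℝ} {Ω E : Set X}

omit [BorelSpace X] in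
lemma Doubling.memL1Loc_of_abs_le_one (h : Doubling μ Cd) {u : X → ℝ} (hu : Measurable u)
    (hu1 : ∀ y, |u y| ≤ 1) : MemL1Loc μ univ u := by
  refine ⟨hu.aemeasurable, fun y _ => ⟨1, one_pos, ?_⟩⟩
  calc ∫⁻ z in univ ∩ ball y 1, ENNReal.ofReal |u z| ∂μ
      ≤ ∫⁻ _ in univ ∩ ball y 1, 1 ∂μ :=
        lintegral_mono fun z => ENNReal.ofReal_le_one.2 (hu1 z)
    _ < ∞ := by simpa using h.measure_ball_lt_top y 1

omit [BorelSpace X] in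
lemma Poincare.setLIntegral_abs_sub_average_le (hp : Poincare μ CP lam) (hd : Doubling μ Cd)
    {u : X → ℝ} {g : X → ℝ≥0∞} (hu : Measurable u) (hu1 : ∀ y, |u y| ≤ 1)
    (hg : IsUpperGradient u g) (x : X) {s : ℝ} (hs : 0 < s) :
    ∫⁻ y in ball x s, ENNReal.ofReal |u y - ⨍ z in ball x s, u z ∂μ| ∂μ ≤
      ENNReal.ofReal (CP * s) * ∫⁻ y in ball x (lam * s), g y ∂μ := by
  obtain ⟨-, hlam, hp⟩ := hp
  have hB0 := (hd.measure_ball_pos x hs).ne'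
  have hBfin := (hd.measure_ball_lt_top x s).ne
  have hint : IntegrableOn u (ball x s) μ :=
    Measure.integrableOn_of_bounded (M := 1) hBfin hu.aestronglyMeasurable (ae_of_all _ hu1)
  have hosc : IntegrableOn (fun y => |u y - ⨍ z in ball x s, u z ∂μ|) (ball x s) μ :=
    (hint.sub (integrableOn_const hBfin)).abs
  calc ∫⁻ y in ball x s, ENNReal.ofReal |u y - ⨍ z in ball x s, u z ∂μ| ∂μ
      = ENNReal.ofReal (⨍ y in ball x s, |u y - ⨍ z in ball x s, u z ∂μ| ∂μ) * μ (ball x s) := by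
        rw [ofReal_setAverage hosc (ae_of_all _ fun _ => abs_nonneg _),
          ENNReal.div_mul_cancel hB0 hBfin]
    _ ≤ ENNReal.ofReal (CP * s) *
          ((∫⁻ y in ball x (lam * s), g y ∂μ) / μ (ball x (lam * s))) * μ (ball x (lam * s)) := by
        gcongr
        · exact hp x s hs u g (hd.memL1Loc_of_abs_le_one hu hu1) hg
        · exact le_mul_of_one_le_left hs.le hlam
    _ = ENNReal.ofReal (CP * s) * ∫⁻ y in ball x (lam * s), g y ∂μ := by
        rw [mul_assoc, ENNReal.div_mul_cancel (hd.measure_ball_pos x (by positivity)).ne'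
          (hd.measure_ball_lt_top x _).ne]

lemma isUpperGradient_indicator_add_top {v : X → ℝ} {g : X → ℝ≥0∞} (hg : Measurable g)
    (hug : ∀ γ : Curve X, γ.In Ω → UGIneq v g γ) {K : Set X} (hK : IsClosed K) (hKΩ : K ⊆ Ω) :
    IsUpperGradient (Ω.indicator v)
      (fun y => K.indicator g y + Kᶜ.indicator (fun _ => ∞) y) := by
  refine ⟨(hg.indicator hK.measurableSet).add
    (measurable_const.indicator hK.measurableSet.compl), fun γ => ?_⟩
  by_cases hγ : γ.In Ω
  · have hle := hug γ hγ
    rw [UGIneq] at hle ⊢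
    rw [indicator_of_mem (hγ 0 ⟨le_rfl, γ.len_nonneg⟩),
      indicator_of_mem (hγ γ.len ⟨γ.len_nonneg, le_rfl⟩)]
    refine hle.trans (γ.integral_mono fun x => ?_)
    by_cases hx : x ∈ K <;> simp [hx]
  rcases γ.len_nonneg.eq_or_lt with hlen | hlen
  · simp [UGIneq, ← hlen]
  · simp only [Curve.In, not_forall] at hγ
    obtain ⟨t, ht, htΩ⟩ := hγ
    rw [UGIneq, γ.integral_eq_top_of_eq_top_on_isOpen hlen hK.isOpen_compl (fun x hx => ?_) ht
      fun htK => htΩ (hKΩ htK)]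
    · exact le_top
    · rw [indicator_of_mem hx, add_top]

omit [MetricSpace X] [BorelSpace X] in
lemma le_setLIntegral_abs_indicator_sub {B : Set X} (hB : MeasurableSet B) (hE : MeasurableSet E)
    {a : ℝ≥0∞} (ha : a ≤ μ (B ∩ E)) (ha' : a ≤ μ (B \ E)) (m : ℝ) :
    a ≤ ∫⁻ y in B, ENNReal.ofReal |E.indicator (fun _ => (1 : ℝ)) y - m| ∂μ := by
  have hone : 1 ≤ ENNReal.ofReal |1 - m| + ENNReal.ofReal |0 - m| := by
    rw [← ENNReal.ofReal_add (abs_nonneg _) (abs_nonneg _), ENNReal.one_le_ofReal, zero_sub,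
      abs_neg]
    simpa using abs_add_le (1 - m) m
  calc a ≤ (ENNReal.ofReal |1 - m| + ENNReal.ofReal |0 - m|) * a :=
        le_mul_of_one_le_left zero_le hone
    _ ≤ ENNReal.ofReal |1 - m| * μ (B ∩ E) + ENNReal.ofReal |0 - m| * μ (B \ E) := by
        rw [add_mul]
        gcongr
    _ = ∫⁻ y in B, ENNReal.ofReal |E.indicator (fun _ => (1 : ℝ)) y - m| ∂μ := by
        rw [← lintegral_inter_add_sdiff _ B hE, ← setLIntegral_const, ← setLIntegral_const]
        congr 1
        · exact setLIntegral_congr_fun (hB.inter hE) fun y hy => by simp [indicator_of_mem hy.2]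
        · exact setLIntegral_congr_fun (hB.diff hE) fun y hy => by simp [indicator_of_notMem hy.2]

omit [MetricSpace X] [BorelSpace X] in
lemma le_setLIntegral_abs_sub_add {B : Set X} (hB : MeasurableSet B) (hE : MeasurableSet E)
    {a : ℝ≥0∞} (ha : a ≤ μ (B ∩ E)) (ha' : a ≤ μ (B \ E)) {w : X → ℝ}
    (hw : AEMeasurable w (μ.restrict B)) (m : ℝ) :
    a ≤ ∫⁻ y in B, ENNReal.ofReal |w y - m| ∂μ +
      ∫⁻ y in B, ENNReal.ofReal |w y - E.indicator (fun _ => (1 : ℝ)) y| ∂μ := by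
  rw [← lintegral_add_left' (by fun_prop)]
  refine (le_setLIntegral_abs_indicator_sub hB hE ha ha' m).trans (lintegral_mono fun y => ?_)
  rw [← ENNReal.ofReal_add (abs_nonneg _) (abs_nonneg _), add_comm, abs_sub_comm (w y)
    (E.indicator _ y)]
  exact ENNReal.ofReal_le_ofReal (abs_sub_le _ _ _)

omit [BorelSpace X] in
lemma PerimApprox.tendsto_setLIntegral_ball [ProperSpace X] {c : ℝ≥0∞} {v : ℕ → X → ℝ}
    {g : ℕ → X → ℝ≥0∞} (hA : PerimApprox μ Ω E c v g) {x : X} {s : ℝ}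
    (hsub : closedBall x s ⊆ Ω) :
    Tendsto (fun i => ∫⁻ y in ball x s,
      ENNReal.ofReal |v i y - E.indicator (fun _ => (1 : ℝ)) y| ∂μ) atTop (𝓝 0) :=
  tendsto_of_tendsto_of_tendsto_of_le_of_le tendsto_const_nhds
    (hA.l1LocConv.tendsto_setLIntegral_of_isCompact (isCompact_closedBall x s) hsub)
    (fun _ => zero_le) fun _ => lintegral_mono_set ball_subset_closedBall

lemma PerimApprox.setLIntegral_abs_sub_average_le {c : ℝ≥0∞} {v : ℕ → X → ℝ}
    {g : ℕ → X → ℝ≥0∞} (hA : PerimApprox μ Ω E c v g) (hd : Doubling μ Cd)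
    (hp : Poincare μ CP lam) (hΩ : IsOpen Ω) {x : X} {s : ℝ} (hs : 0 < s)
    (hsub : closedBall x (lam * s) ⊆ Ω) (i : ℕ) :
    ∃ m : ℝ, ∫⁻ y in ball x s, ENNReal.ofReal |v i y - m| ∂μ ≤
      ENNReal.ofReal (CP * s) * ∫⁻ y in ball x (lam * s), g i y ∂μ := by
  have hball : ball x s ⊆ Ω := (ball_subset_closedBall.trans (closedBall_subset_closedBall
    (le_mul_of_one_le_left hs.le hp.2.1))).trans hsub
  have habs : ∀ y, |Ω.indicator (v i) y| ≤ 1 := fun y => by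
    by_cases hy : y ∈ Ω
    · simpa [hy, abs_of_nonneg (hA.nonneg i y)] using hA.le_one i y
    · simp [hy]
  have hpoinc := hp.setLIntegral_abs_sub_average_le hd ((hA.locLipOn i).measurable_indicator hΩ)
    habs (isUpperGradient_indicator_add_top (hA.measurable i) (hA.ugIneq i) isClosed_closedBall
      hsub) x hs
  refine ⟨⨍ z in ball x s, Ω.indicator (v i) z ∂μ, ?_⟩
  convert hpoinc using 1
  · exact setLIntegral_congr_fun measurableSet_ball fun y hy => by
      simp only [indicator_of_mem (hball hy)]
  · exact congrArg _ (setLIntegral_congr_fun measurableSet_ball fun y hy => by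
      simp [ball_subset_closedBall hy])

lemma PerimApprox.eventually_mul_measure_ball_le_setLIntegral [ProperSpace X] {c : ℝ≥0∞}
    {v : ℕ → X → ℝ} {g : ℕ → X → ℝ≥0∞} (hA : PerimApprox μ Ω E c v g) (hd : Doubling μ Cd)
    (hp : Poincare μ CP lam) (hΩ : IsOpen Ω) (hE : MeasurableSet E) {x : X} {s : ℝ} (hs : 0 < s)
    (hsub : closedBall x (lam * s) ⊆ Ω) {a : ℝ} (ha : 0 < a)
    (hbal : BalancedBall μ E a x s) :
    ∀ᶠ i in atTop, ENNReal.ofReal (a / (2 * CP * s)) * μ (ball x s) ≤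
      ∫⁻ y in ball x (lam * s), g i y ∂μ := by
  have hCPs : 0 < CP * s := mul_pos (one_pos.trans_le hp.1) hs
  have hsubs : closedBall x s ⊆ Ω :=
    (closedBall_subset_closedBall (le_mul_of_one_le_left hs.le hp.2.1)).trans hsub
  have hmeas : ∀ {i}, AEMeasurable (v i) (μ.restrict (ball x s)) := fun {i} =>
    (((hA.locLipOn i).continuousOn hΩ).mono (ball_subset_closedBall.trans hsubs)).aemeasurable
      measurableSet_ball
  have hsplit : ENNReal.ofReal a * μ (ball x s) =
      ENNReal.ofReal (a / 2) * μ (ball x s) + ENNReal.ofReal (a / 2) * μ (ball x s) := by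
    rw [← add_mul, ← ENNReal.ofReal_add (by positivity) (by positivity), add_halves]
  have hfin : ENNReal.ofReal (a / 2) * μ (ball x s) ≠ ∞ :=
    ENNReal.mul_ne_top ENNReal.ofReal_ne_top (hd.measure_ball_lt_top x s).ne
  have hpos : 0 < ENNReal.ofReal (a / 2) * μ (ball x s) :=
    ENNReal.mul_pos (by simpa using ha) (hd.measure_ball_pos x hs).ne'
  filter_upwards [(hA.tendsto_setLIntegral_ball hsubs).eventually (gt_mem_nhds hpos)] with i hi
  obtain ⟨m, hm⟩ := hA.setLIntegral_abs_sub_average_le hd hp hΩ hs hsub i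
  have hosc : ENNReal.ofReal (a / 2) * μ (ball x s) ≤
      ENNReal.ofReal (CP * s) * ∫⁻ y in ball x (lam * s), g i y ∂μ := by
    refine ENNReal.le_of_add_le_add_right hfin ?_
    rw [← hsplit]
    exact (le_setLIntegral_abs_sub_add measurableSet_ball hE hbal.le_measure_inter
      hbal.le_measure_diff hmeas m).trans (add_le_add hm hi.le)
  rw [show a / (2 * CP * s) = a / 2 / (CP * s) by field_simp, ENNReal.ofReal_div_of_pos hCPs,
    ENNReal.mul_div_right_comm.symm]
  exact ENNReal.div_le_of_le_mul' hosc

end PoincareInequality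

section Boxing

variable {μ : Measure X} {Cd CP lam : ℝ} {Ω E : Set X}

omit [BorelSpace X] in
lemma Doubling.exists_density_lt_of_density_le (h : Doubling μ Cd) {κ θ : ℝ} (hκ : 0 < κ)
    (hκ1 : κ ≤ 1) (hθ : 0 < θ) :
    ∃ α > 0, ∀ (E : Set X) (y : X) (r : ℝ), 0 < r →
      μ (ball y (4 * r) ∩ E) ≤ ENNReal.ofReal α * μ (ball y (4 * r)) →
      ∀ x ∈ ball y r, μ (ball x (κ * r) ∩ E) < ENNReal.ofReal θ * μ (ball x (κ * r)) := by
  obtain ⟨C, hC1, hC⟩ := h.exists_measure_ball_mul_le (5 / κ)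
  have hC0 : (0 : ℝ) < C := one_pos.trans_le (by exact_mod_cast hC1)
  refine ⟨θ / (2 * C), div_pos hθ (mul_pos two_pos hC0), fun E y r hr hsmall x hx => ?_⟩
  have hxy : dist x y < r := hx
  have hκr : 0 < κ * r := by positivity
  calc μ (ball x (κ * r) ∩ E)
      ≤ μ (ball y (4 * r) ∩ E) := by
        gcongr
        exact ball_subset_ball' (by nlinarith)
    _ ≤ ENNReal.ofReal (θ / (2 * C)) * μ (ball y (4 * r)) := hsmall
    _ ≤ ENNReal.ofReal (θ / (2 * C)) * μ (ball x (5 / κ * (κ * r))) := by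
        gcongr
        refine ball_subset_ball' ?_
        rw [dist_comm, show 5 / κ * (κ * r) = 5 * r by field_simp]
        linarith
    _ ≤ ENNReal.ofReal (θ / (2 * C)) * (C * μ (ball x (κ * r))) := by
        gcongr
        exact hC x _ hκr
    _ = ENNReal.ofReal (θ / 2) * μ (ball x (κ * r)) := by
        rw [← mul_assoc, ← ENNReal.ofReal_coe_nnreal, ← ENNReal.ofReal_mul (by positivity),
          show θ / (2 * C) * C = θ / 2 by field_simp]
    _ < ENNReal.ofReal θ * μ (ball x (κ * r)) := by
        refine ENNReal.mul_lt_mul_left (h.measure_ball_pos x hκr).ne'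
          (h.measure_ball_lt_top x _).ne ?_
        exact (ENNReal.ofReal_lt_ofReal_iff hθ).2 (half_lt_self hθ)

lemma Doubling.exists_countable_disjoint_balancedBall [SecondCountableTopology X]
    (h : Doubling μ Cd) (hE : MeasurableSet E) {A : Set X} {K ρ : ℝ} (hK : 0 < K) (hρ : 0 < ρ)
    (hsmall : ∀ x ∈ A, μ (ball x ρ ∩ E) < ENNReal.ofReal (1 / (2 * Cd)) * μ (ball x ρ)) :
    ∃ (u : Set X) (s : X → ℝ), u ⊆ A ∧
      (∀ x ∈ u, 0 < s x ∧ s x ≤ ρ ∧ BalancedBall μ E (1 / (2 * Cd ^ 2)) x (s x)) ∧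
      (u.PairwiseDisjoint fun x => closedBall x (K * s x)) ∧
      μ (A ∩ E) ≤ ∑' x : u, μ (ball (x : X) (6 * K * s x)) := by
  set S : Set X := {x ∈ A | ∀ᶠ t in 𝓝[>] (0 : ℝ),
    ENNReal.ofReal (1 / (2 * Cd)) * μ (ball x t) ≤ μ (ball x t ∩ E)}
  have hradius : ∀ x ∈ S, ∃ s, 0 < s ∧ s ≤ ρ ∧ BalancedBall μ E (1 / (2 * Cd ^ 2)) x s :=
    fun x hx => h.exists_balancedBall hE hx.2 hρ (hsmall x hx.1)
  choose! s hs using hradius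
  obtain ⟨u, huS, hu, hdisj, hcover⟩ := exists_countable_disjoint_closedBall_covering S id
    (fun x => K * s x) (K * ρ) (fun x hx => mul_pos hK (hs x hx).1)
    fun x hx => mul_le_mul_of_nonneg_left (hs x hx).2.1 hK.le
  have := hu.to_subtype
  refine ⟨u, s, fun x hx => (huS hx).1, fun x hx => hs x (huS hx), hdisj, ?_⟩
  calc μ (A ∩ E) ≤ μ S := by
        refine measure_mono_ae ?_
        filter_upwards [(ae_restrict_iff' hE).1 (h.ae_eventually_mul_measure_ball_le E)]
          with x hx hxAE using ⟨hxAE.1, hx hxAE.2⟩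
    _ ≤ μ (⋃ x : u, ball (x : X) (6 * K * s x)) := by
        refine measure_mono fun x hx => ?_
        obtain ⟨b, hb, hsub⟩ := hcover x hx
        refine mem_iUnion.2 ⟨⟨b, hb⟩, ?_⟩
        rw [mul_assoc]
        exact hsub (mem_closedBall_self (mul_pos hK (hs x hx).1).le)
    _ ≤ ∑' x : u, μ (ball (x : X) (6 * K * s x)) := measure_iUnion_le _

lemma exists_finset_subset_le_two_mul_sum {ι : Type*} {u : Set ι} {f : ι → ℝ≥0∞} {m : ℝ≥0∞}
    (hm : m ≠ ∞) (hle : m ≤ ∑' b : u, f b) :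
    ∃ t : Finset ι, (t : Set ι) ⊆ u ∧ m ≤ 2 * ∑ b ∈ t, f b := by
  rcases eq_or_ne m 0 with rfl | hm0
  · exact ⟨∅, by simp, zero_le⟩
  have hlt : m / 2 < ∑' b : u, f b := (ENNReal.half_lt_self hm0 hm).trans_le hle
  rw [ENNReal.tsum_eq_iSup_sum, lt_iSup_iff] at hlt
  obtain ⟨t, ht⟩ := hlt
  refine ⟨t.map (Function.Embedding.subtype _), by simp, ?_⟩
  rw [Finset.sum_map, mul_comm]
  exact ENNReal.div_le_iff_le_mul (Or.inl two_ne_zero) (Or.inl ENNReal.ofNat_ne_top) |>.1 ht.le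

lemma PerimApprox.eventually_sum_mul_measure_ball_le_setLIntegral [ProperSpace X] {c : ℝ≥0∞}
    {v : ℕ → X → ℝ} {g : ℕ → X → ℝ≥0∞} (hA : PerimApprox μ Ω E c v g) (hd : Doubling μ Cd)
    (hp : Poincare μ CP lam) (hΩ : IsOpen Ω) (hE : MeasurableSet E) {a : ℝ} (ha : 0 < a)
    {t : Finset X} {s : X → ℝ} (hs : ∀ x ∈ t, 0 < s x ∧ BalancedBall μ E a x (s x))
    (hdisj : (t : Set X).PairwiseDisjoint fun x => closedBall x (lam * s x)) {U : Set X}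
    (hUΩ : U ⊆ Ω) (hsub : ∀ x ∈ t, closedBall x (lam * s x) ⊆ U) :
    ∀ᶠ i in atTop, ∑ x ∈ t, ENNReal.ofReal (a / (2 * CP * s x)) * μ (ball x (s x)) ≤
      ∫⁻ z in U, g i z ∂μ := by
  have hballs : ∀ᶠ i in atTop, ∀ x ∈ t,
      ENNReal.ofReal (a / (2 * CP * s x)) * μ (ball x (s x)) ≤
        ∫⁻ z in ball x (lam * s x), g i z ∂μ :=
    (Filter.eventually_all_finset t).2 fun x hx =>
      hA.eventually_mul_measure_ball_le_setLIntegral hd hp hΩ hE (hs x hx).1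
        ((hsub x hx).trans hUΩ) ha (hs x hx).2
  filter_upwards [hballs] with i hi
  refine (Finset.sum_le_sum hi).trans ?_
  rw [← lintegral_biUnion_finset (fun x hx y hy hxy => (hdisj hx hy hxy).mono
    ball_subset_closedBall ball_subset_closedBall) fun _ _ => measurableSet_ball]
  exact lintegral_mono_set (iUnion₂_subset fun x hx => ball_subset_closedBall.trans (hsub x hx))

lemma exists_pos_le_one_mul_le {K C a : ℝ} (hK : 1 ≤ K) (hC : 0 < C) (ha : 0 < a) :
    ∃ κ > 0, κ ≤ 1 ∧ K * κ ≤ 1 ∧ C * κ ≤ a := by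
  have hK0 : 0 < K := one_pos.trans_le hK
  refine ⟨min (1 / K) (a / C), lt_min (by positivity) (by positivity),
    (min_le_left _ _).trans ((div_le_one hK0).2 hK), ?_, ?_⟩
  · rw [← le_div_iff₀' hK0]
    exact min_le_left _ _
  · rw [← le_div_iff₀' hC]
    exact min_le_right _ _

lemma ofReal_div_mul_le_sum {ι : Type*} {t : Finset ι} {s : ι → ℝ} {f : ι → ℝ≥0∞} {C : ℝ≥0}
    {m : ℝ≥0∞} {M r κ b : ℝ} (hr : 0 < r) (hM : 0 ≤ M) (hs : ∀ x ∈ t, 0 < s x ∧ s x ≤ κ * r)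
    (hκ : 2 * M * C * κ ≤ b) (hm : m ≤ 2 * ∑ x ∈ t, C * f x) :
    ENNReal.ofReal (M / r) * m ≤ ∑ x ∈ t, ENNReal.ofReal (b / s x) * f x := by
  calc ENNReal.ofReal (M / r) * m ≤ ENNReal.ofReal (M / r) * (2 * ∑ x ∈ t, C * f x) := by gcongr
    _ = ∑ x ∈ t, ENNReal.ofReal (2 * M * C / r) * f x := by
        simp only [Finset.mul_sum, ← mul_assoc]
        rw [show 2 * M * C / r = M / r * 2 * C by ring, ENNReal.ofReal_mul (by positivity),
          ENNReal.ofReal_mul (by positivity), ENNReal.ofReal_ofNat, ENNReal.ofReal_coe_nnreal]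
    _ ≤ ∑ x ∈ t, ENNReal.ofReal (b / s x) * f x := by
        refine Finset.sum_le_sum fun x hx => mul_le_mul_left (ENNReal.ofReal_le_ofReal ?_) _
        obtain ⟨hsx, hsκ⟩ := hs x hx
        rw [div_le_div_iff₀ hr hsx]
        calc 2 * M * C * s x ≤ 2 * M * C * (κ * r) := by gcongr
          _ = 2 * M * C * κ * r := by ring
          _ ≤ b * r := by gcongr

lemma exists_forall_perimApprox_eventually_mul_measure_le [ProperSpace X] (hd : Doubling μ Cd)
    (hp : Poincare μ CP lam) {M : ℝ} (hM : 0 < M) :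
    ∃ α > 0, ∀ {Ω E : Set X} {c : ℝ≥0∞} {v : ℕ → X → ℝ} {g : ℕ → X → ℝ≥0∞},
      IsOpen Ω → MeasurableSet E → PerimApprox μ Ω E c v g → ∀ (y : X) (r : ℝ), 0 < r →
      closedBall y (4 * r) ⊆ Ω →
      μ (ball y (4 * r) ∩ E) ≤ ENNReal.ofReal α * μ (ball y (4 * r)) →
      ∀ᶠ i in atTop, ENNReal.ofReal (M / r) * μ (ball y r ∩ E) ≤
        ∫⁻ z in ball y (2 * r), g i z ∂μ := by
  have hCd : 0 < Cd := one_pos.trans_le hd.1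
  have hCP : 0 < CP := one_pos.trans_le hp.1
  have hlam : 1 ≤ lam := hp.2.1
  obtain ⟨C, hC1, hC⟩ := hd.exists_measure_ball_mul_le (6 * lam)
  have hC0 : (0 : ℝ) < C := one_pos.trans_le (by exact_mod_cast hC1)
  set a : ℝ := 1 / (2 * Cd ^ 2)
  have ha : 0 < a := by positivity
  obtain ⟨κ, hκ, hκ1, hlamκ, hκa⟩ := exists_pos_le_one_mul_le hlam
    (show 0 < 4 * CP * M * C from mul_pos (by positivity) hC0) ha
  obtain ⟨α, hα, hsmall⟩ := hd.exists_density_lt_of_density_le hκ hκ1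
    (show 0 < 1 / (2 * Cd) by positivity)
  refine ⟨α, hα, fun {Ω E c v g} hΩ hE hA y r hr hsub hdens => ?_⟩
  obtain ⟨u, s, huA, hs, hdisj, hle⟩ := hd.exists_countable_disjoint_balancedBall hE
    (one_pos.trans_le hlam) (mul_pos hκ hr) (hsmall E y r hr hdens)
  obtain ⟨t, htu, htle⟩ := exists_finset_subset_le_two_mul_sum
    (f := fun x => μ (ball x (6 * lam * s x)))
    (measure_ne_top_of_subset inter_subset_left (hd.measure_ball_lt_top y r).ne) hle
  have hinside : ∀ x ∈ t, closedBall x (lam * s x) ⊆ ball y (2 * r) := fun x hx => by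
    have hxy : dist x y < r := huA (htu hx)
    have hsx : lam * s x ≤ lam * (κ * r) := by gcongr; exact (hs x (htu hx)).2.1
    exact closedBall_subset_ball' (by nlinarith)
  filter_upwards [hA.eventually_sum_mul_measure_ball_le_setLIntegral hd hp hΩ hE ha
    (fun x hx => ⟨(hs x (htu hx)).1, (hs x (htu hx)).2.2⟩) (hdisj.subset htu)
    ((ball_subset_closedBall.trans (closedBall_subset_closedBall (by linarith))).trans hsub)
    hinside] with i hi
  refine le_trans ?_ hi
  simp only [← div_div a]
  refine ofReal_div_mul_le_sum (C := C) hr hM.le (fun x hx => ⟨(hs x (htu hx)).1,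
    (hs x (htu hx)).2.1⟩) ((le_div_iff₀ (by positivity)).2 (by linarith)) (htle.trans ?_)
  gcongr with x hx
  exact hC x _ (hs x (htu hx)).1

end Boxing

section BadBalls

/-- A ball `B = B(p.1, p.2)` with `closedBall p.1 (4 * p.2) ⊆ Ω` such that `E` has density at
least `α` in `B` but at most `2α` in `4B`. Cutting off an approximation of `χ_E` on such a ball
saves more energy than it costs, provided `α` is small. -/
structure BadBall (μ : Measure X) (Ω E : Set X) (α : ℝ) (p : X × ℝ) : Prop where
  pos : 0 < p.2
  closedBall_subset : closedBall p.1 (4 * p.2) ⊆ Ω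
  le_measure_inter : ENNReal.ofReal α * μ (ball p.1 p.2) ≤ μ (ball p.1 p.2 ∩ E)
  measure_inter_le :
    μ (ball p.1 (4 * p.2) ∩ E) ≤ ENNReal.ofReal (2 * α) * μ (ball p.1 (4 * p.2))

/-- A finite family of bad balls `B` whose closed enlargements `4B` are disjoint. -/
structure BadFamily (μ : Measure X) (Ω E : Set X) (α : ℝ) (F : Finset (X × ℝ)) : Prop where
  badBall : ∀ p ∈ F, BadBall μ Ω E α p
  pairwiseDisjoint : (F : Set (X × ℝ)).PairwiseDisjoint fun p => closedBall p.1 (4 * p.2)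

/-- The codimension-one weight `μ(B) / r` of the ball `B = B(x, r)` encoded by `p = (x, r)`. -/
def ballWeight (μ : Measure X) (p : X × ℝ) : ℝ≥0∞ := ENNReal.ofReal (1 / p.2) * μ (ball p.1 p.2)

/-- The cutoff function of a family of balls `B`: it is `1` on every `2B` and vanishes outside
the balls `4B`. -/
def ballCutoff (F : Finset (X × ℝ)) : X → ℝ := tents F Prod.fst fun p => 2 * p.2

variable {μ : Measure X} {Cd CP lam α : ℝ} {Ω E : Set X} {F : Finset (X × ℝ)} {p : X × ℝ}
  {c : ℝ≥0∞} {v : ℕ → X → ℝ} {g : ℕ → X → ℝ≥0∞}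

omit [BorelSpace X] in
lemma ballWeight_ne_top (hd : Doubling μ Cd) (p : X × ℝ) : ballWeight μ p ≠ ∞ :=
  ENNReal.mul_ne_top ENNReal.ofReal_ne_top (hd.measure_ball_lt_top _ _).ne

section

omit [BorelSpace X]

lemma ofReal_mul_ballWeight (hp : 0 < p.2) : ENNReal.ofReal p.2 * ballWeight μ p =
    μ (ball p.1 p.2) := by
  rw [ballWeight, ← mul_assoc, ← ENNReal.ofReal_mul hp.le, mul_one_div_cancel hp.ne',
    ENNReal.ofReal_one, one_mul]

lemma BadBall.ofReal_mul_ballWeight_le (hb : BadBall μ Ω E α p) {M : ℝ} (hM : 0 ≤ M) :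
    ENNReal.ofReal (M * α) * ballWeight μ p ≤
      ENNReal.ofReal (M / p.2) * μ (ball p.1 p.2 ∩ E) := by
  calc ENNReal.ofReal (M * α) * ballWeight μ p
      = ENNReal.ofReal (M / p.2) * (ENNReal.ofReal α * μ (ball p.1 p.2)) := by
        rw [ENNReal.ofReal_mul hM, div_eq_mul_one_div, ENNReal.ofReal_mul hM, ballWeight]
        ring
    _ ≤ ENNReal.ofReal (M / p.2) * μ (ball p.1 p.2 ∩ E) := by
        gcongr
        exact hb.le_measure_inter

lemma BadFamily.radius_pos (hF : BadFamily μ Ω E α F) : ∀ p ∈ F, 0 < 2 * p.2 :=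
  fun p hp => mul_pos two_pos (hF.badBall p hp).pos

lemma BadFamily.pairwiseDisjoint_ball (hF : BadFamily μ Ω E α F) :
    (F : Set (X × ℝ)).PairwiseDisjoint fun p => ball p.1 (2 * (2 * p.2)) := fun p hp q hq hpq =>
  (hF.pairwiseDisjoint hp hq hpq).mono
    (ball_subset_closedBall.trans (closedBall_subset_closedBall (by linarith)))
    (ball_subset_closedBall.trans (closedBall_subset_closedBall (by linarith)))

lemma BadFamily.ballCutoff_mem_Icc (hF : BadFamily μ Ω E α F) (x : X) :
    ballCutoff F x ∈ Icc 0 1 :=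
  tents_mem_Icc hF.radius_pos hF.pairwiseDisjoint_ball x

end

omit [MetricSpace X] [BorelSpace X] in
lemma setLIntegral_ofReal_le_measure_inter_add {w : X → ℝ} (hw : ∀ x, w x ≤ 1)
    (hE : MeasurableSet E) (B : Set X) :
    ∫⁻ x in B, ENNReal.ofReal (w x) ∂μ ≤
      μ (B ∩ E) + ∫⁻ x in B, ENNReal.ofReal |w x - E.indicator (fun _ => (1 : ℝ)) x| ∂μ := by
  calc ∫⁻ x in B, ENNReal.ofReal (w x) ∂μ
      ≤ ∫⁻ x in B, (E.indicator 1 x +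
          ENNReal.ofReal |w x - E.indicator (fun _ => (1 : ℝ)) x|) ∂μ := by
        refine lintegral_mono fun x => ?_
        by_cases hx : x ∈ E
        · simp only [indicator_of_mem hx]
          exact (ENNReal.ofReal_le_one.2 (hw x)).trans le_self_add
        · simp only [indicator_of_notMem hx, sub_zero, zero_add]
          exact ENNReal.ofReal_le_ofReal (le_abs_self _)
    _ = μ (B ∩ E) + ∫⁻ x in B, ENNReal.ofReal |w x - E.indicator (fun _ => (1 : ℝ)) x| ∂μ := by
        rw [lintegral_add_left (measurable_one.indicator hE), lintegral_indicator_one hE,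
          Measure.restrict_apply hE, inter_comm E]

section

omit [BorelSpace X]

lemma BadBall.eventually_setLIntegral_le [ProperSpace X] (hb : BadBall μ Ω E α p)
    (hd : Doubling μ Cd) (hE : MeasurableSet E) (hα : 0 < α) (hA : PerimApprox μ Ω E c v g) :
    ∀ᶠ i in atTop, ∫⁻ x in ball p.1 (4 * p.2), ENNReal.ofReal (v i x) ∂μ ≤
      ENNReal.ofReal (4 * α) * μ (ball p.1 (4 * p.2)) := by
  have hpos : 0 < ENNReal.ofReal (2 * α) * μ (ball p.1 (4 * p.2)) :=
    ENNReal.mul_pos (by simpa using hα)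
      (hd.measure_ball_pos _ (mul_pos four_pos hb.pos)).ne'
  filter_upwards [(hA.tendsto_setLIntegral_ball hb.closedBall_subset).eventually
    (gt_mem_nhds hpos)] with i hi
  refine (setLIntegral_ofReal_le_measure_inter_add (hA.le_one i) hE _).trans ?_
  refine (add_le_add hb.measure_inter_le hi.le).trans_eq ?_
  rw [← add_mul, ← ENNReal.ofReal_add (by positivity) (by positivity)]
  ring_nf

lemma BadBall.eventually_cost_le [ProperSpace X] (hb : BadBall μ Ω E α p) (hd : Doubling μ Cd)
    {C : ℝ≥0} (hC : ∀ x r, 0 < r → μ (ball x (4 * r)) ≤ C * μ (ball x r)) (hE : MeasurableSet E)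
    (hα : 0 < α) (hA : PerimApprox μ Ω E c v g) :
    ∀ᶠ i in atTop, ENNReal.ofReal (1 / (2 * p.2)) *
      ∫⁻ x in Ω ∩ ball p.1 (2 * (2 * p.2)), ENNReal.ofReal (v i x) ∂μ ≤
        ENNReal.ofReal (4 * C * α) * ballWeight μ p := by
  have hp := hb.pos
  filter_upwards [hb.eventually_setLIntegral_le hd hE hα hA] with i hi
  calc ENNReal.ofReal (1 / (2 * p.2)) *
        ∫⁻ x in Ω ∩ ball p.1 (2 * (2 * p.2)), ENNReal.ofReal (v i x) ∂μ
      ≤ ENNReal.ofReal (1 / p.2) * ∫⁻ x in ball p.1 (4 * p.2), ENNReal.ofReal (v i x) ∂μ := by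
        rw [← mul_assoc, show (2 : ℝ) * 2 = 4 by norm_num]
        gcongr
        · linarith
        · exact inter_subset_right
    _ ≤ ENNReal.ofReal (1 / p.2) * (ENNReal.ofReal (4 * α) * (C * μ (ball p.1 p.2))) := by
        refine mul_le_mul_right (hi.trans ?_) _
        gcongr
        exact hC _ _ hp
    _ = ENNReal.ofReal (4 * C * α) * ballWeight μ p := by
        rw [show 4 * C * α = 4 * α * C by ring,
          ENNReal.ofReal_mul (q := (C : ℝ)) (by positivity), ENNReal.ofReal_coe_nnreal, ballWeight]
        ring

end

lemma BadFamily.lintegral_sdiff_add_sum_eq (hF : BadFamily μ Ω E α F) (f : X → ℝ≥0∞) :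
    ∫⁻ x in Ω \ ⋃ p ∈ F, ball p.1 (2 * p.2), f x ∂μ +
      ∑ p ∈ F, ∫⁻ x in ball p.1 (2 * p.2), f x ∂μ = ∫⁻ x in Ω, f x ∂μ := by
  have hsub : ⋃ p ∈ F, ball p.1 (2 * p.2) ⊆ Ω := iUnion₂_subset fun p hp =>
    (ball_subset_closedBall.trans (closedBall_subset_closedBall
      (by linarith [hF.radius_pos p hp]))).trans (hF.badBall p hp).closedBall_subset
  rw [← lintegral_biUnion_finset (fun p hp q hq hpq => (hF.pairwiseDisjoint_ball hp hq hpq).mono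
      (ball_subset_ball (by linarith [hF.radius_pos p hp]))
      (ball_subset_ball (by linarith [hF.radius_pos q hq]))) (fun _ _ => measurableSet_ball),
    add_comm, ← lintegral_inter_add_sdiff f Ω
      (F.measurableSet_biUnion fun p _ => measurableSet_ball), inter_eq_self_of_subset_right hsub]

lemma PerimApprox.exists_isWeakUpperGradientOn_mul_ballCutoff (hA : PerimApprox μ Ω E c v g)
    (hd : Doubling μ Cd) (hΩ : IsOpen Ω) (hc : c < ∞) (hF : BadFamily μ Ω E α F) (i : ℕ)
    {a b : ℝ≥0∞} (ha : a ≠ ∞)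
    (hcost : ∀ p ∈ F, ENNReal.ofReal (1 / (2 * p.2)) *
      ∫⁻ x in Ω ∩ ball p.1 (2 * (2 * p.2)), ENNReal.ofReal (v i x) ∂μ ≤ a * ballWeight μ p)
    (hgain : ∀ p ∈ F, (a + b) * ballWeight μ p ≤ ∫⁻ x in ball p.1 (2 * p.2), g i x ∂μ) :
    ∃ h, IsWeakUpperGradientOn μ (fun x => v i x * (1 - ballCutoff F x)) h Ω ∧
      ∫⁻ x in Ω, h x ∂μ + b * ∑ p ∈ F, ballWeight μ p ≤ c := by
  obtain ⟨h, hh, hle⟩ := exists_isWeakUpperGradientOn_mul_one_sub_tents hΩ (hA.locLipOn i)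
    (hA.nonneg i) (hA.le_one i) (derivBoundedOn_of_forall_ugIneq hΩ (hA.measurable i)
      ((hA.lintegral_lt i).trans hc) (hA.ugIneq i)) hF.radius_pos hF.pairwiseDisjoint_ball
  refine ⟨h, hh, ?_⟩
  set W := ∑ p ∈ F, ballWeight μ p
  have hW : a * W ≠ ∞ :=
    ENNReal.mul_ne_top ha (ENNReal.sum_ne_top.2 fun p _ => ballWeight_ne_top hd p)
  refine ENNReal.le_of_add_le_add_right hW ?_
  calc ∫⁻ x in Ω, h x ∂μ + b * W + a * W
      ≤ ∫⁻ x in Ω \ ⋃ p ∈ F, ball p.1 (2 * p.2), g i x ∂μ + a * W + b * W + a * W := by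
        gcongr
        refine hle.trans (add_le_add le_rfl ?_)
        rw [Finset.mul_sum]
        exact Finset.sum_le_sum hcost
    _ = ∫⁻ x in Ω \ ⋃ p ∈ F, ball p.1 (2 * p.2), g i x ∂μ + (a + b) * W + a * W := by ring
    _ ≤ ∫⁻ x in Ω, g i x ∂μ + a * W := by
        rw [← hF.lintegral_sdiff_add_sum_eq, Finset.mul_sum]
        gcongr with p hp
        exact hgain p hp
    _ ≤ c + a * W := by
        gcongr
        exact (hA.lintegral_lt i).le

lemma exists_forall_badFamily_eventually_lintegral_add_le [ProperSpace X] (hd : Doubling μ Cd)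
    (hp : Poincare μ CP lam) :
    ∃ α₀ > 0, ∀ {Ω E : Set X} {c : ℝ≥0∞} {v : ℕ → X → ℝ} {g : ℕ → X → ℝ≥0∞} {α : ℝ}
      {F : Finset (X × ℝ)}, IsOpen Ω → MeasurableSet E → c < ∞ → PerimApprox μ Ω E c v g →
      0 < α → α ≤ α₀ → BadFamily μ Ω E α F →
      ∀ᶠ i in atTop, ∃ h, IsWeakUpperGradientOn μ (fun x => v i x * (1 - ballCutoff F x)) h Ω ∧
        ∫⁻ x in Ω, h x ∂μ + ENNReal.ofReal α * ∑ p ∈ F, ballWeight μ p ≤ c := by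
  obtain ⟨C, -, hC⟩ := hd.exists_measure_ball_mul_le 4
  obtain ⟨α₁, hα₁, hbox⟩ := exists_forall_perimApprox_eventually_mul_measure_le hd hp
    (M := 4 * C + 1) (by positivity)
  refine ⟨α₁ / 2, half_pos hα₁, fun {Ω E c v g α F} hΩ hE hc hA hα hle hF => ?_⟩
  have hcost := (Filter.eventually_all_finset F).2 fun p hpF =>
    (hF.badBall p hpF).eventually_cost_le hd hC hE hα hA
  have hgain := (Filter.eventually_all_finset F).2 fun p hpF =>
    hbox hΩ hE hA p.1 p.2 (hF.badBall p hpF).pos (hF.badBall p hpF).closedBall_subset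
      ((hF.badBall p hpF).measure_inter_le.trans (by gcongr; linarith))
  filter_upwards [hcost, hgain] with i hi_cost hi_gain
  refine hA.exists_isWeakUpperGradientOn_mul_ballCutoff hd hΩ hc hF i ENNReal.ofReal_ne_top
    hi_cost fun p hpF => ?_
  rw [← ENNReal.ofReal_add (by positivity) hα.le, show 4 * C * α + α = (4 * C + 1) * α by ring]
  exact ((hF.badBall p hpF).ofReal_mul_ballWeight_le (by positivity)).trans (hi_gain p hpF)

end BadBalls

section SmallWeight

variable {μ : Measure X} {Cd CP lam α : ℝ} {Ω E : Set X}

lemma lintegral_tents_le {ι : Type*} {s : Finset ι} {c : ι → X} {ρ : ι → ℝ}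
    (hρ : ∀ i ∈ s, 0 < ρ i) :
    ∫⁻ x, ENNReal.ofReal (tents s c ρ x) ∂μ ≤ ∑ i ∈ s, μ (ball (c i) (2 * ρ i)) := by
  calc ∫⁻ x, ENNReal.ofReal (tents s c ρ x) ∂μ
      ≤ ∫⁻ x, ∑ i ∈ s, (ball (c i) (2 * ρ i)).indicator 1 x ∂μ := by
        refine lintegral_mono fun x => ?_
        rw [tents, ENNReal.ofReal_sum_of_nonneg fun _ _ => tent_nonneg _ _ _]
        refine Finset.sum_le_sum fun i hi => ?_
        by_cases hx : x ∈ ball (c i) (2 * ρ i)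
        · rw [indicator_of_mem hx]
          exact ENNReal.ofReal_le_one.2 (tent_le_one _ _ _)
        · rw [tent_eq_zero (hρ i hi) hx, ENNReal.ofReal_zero]
          exact zero_le
    _ = ∑ i ∈ s, μ (ball (c i) (2 * ρ i)) := by
        rw [lintegral_finsetSum _ fun i _ => measurable_one.indicator measurableSet_ball]
        simp only [lintegral_indicator_one measurableSet_ball]

lemma BadFamily.lintegral_ballCutoff_le {F : Finset (X × ℝ)} (hF : BadFamily μ Ω E α F) {C : ℝ≥0}
    (hC : ∀ x r, 0 < r → μ (ball x (4 * r)) ≤ C * μ (ball x r)) {R : ℝ}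
    (hR : ∀ p ∈ F, p.2 ≤ R) :
    ∫⁻ x, ENNReal.ofReal (ballCutoff F x) ∂μ ≤
      C * (ENNReal.ofReal R * ∑ p ∈ F, ballWeight μ p) := by
  refine (lintegral_tents_le hF.radius_pos).trans ?_
  simp only [Finset.mul_sum]
  refine Finset.sum_le_sum fun p hp => ?_
  have hp0 := (hF.badBall p hp).pos
  calc μ (ball p.1 (2 * (2 * p.2))) = μ (ball p.1 (4 * p.2)) := by ring_nf
    _ ≤ C * μ (ball p.1 p.2) := hC _ _ hp0
    _ = C * (ENNReal.ofReal p.2 * ballWeight μ p) := by rw [ofReal_mul_ballWeight hp0]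
    _ ≤ C * (ENNReal.ofReal R * ballWeight μ p) := by
        gcongr
        exact hR p hp

omit [BorelSpace X] in
lemma L1LocConv.comp {v : ℕ → X → ℝ} {u : X → ℝ} (h : L1LocConv μ Ω v u) {φ : ℕ → ℕ}
    (hφ : Tendsto φ atTop atTop) : L1LocConv μ Ω (fun n => v (φ n)) u := fun x hx =>
  let ⟨r, hr, hconv⟩ := h x hx
  ⟨r, hr, hconv.comp hφ⟩

omit [BorelSpace X] in
lemma PerimApprox.abs_le_one {c : ℝ≥0∞} {v : ℕ → X → ℝ} {g : ℕ → X → ℝ≥0∞}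
    (hA : PerimApprox μ Ω E c v g) (i : ℕ) (x : X) : |v i x| ≤ 1 :=
  (abs_of_nonneg (hA.nonneg i x)).trans_le (hA.le_one i x)

omit [BorelSpace X] in
lemma L1LocConv.mul_one_sub {v T : ℕ → X → ℝ} {u : X → ℝ} (h : L1LocConv μ Ω v u)
    (hv : ∀ n x, |v n x| ≤ 1) (hT : ∀ n, Measurable (T n)) (hT0 : ∀ n x, 0 ≤ T n x)
    (hlim : Tendsto (fun n => ∫⁻ x, ENNReal.ofReal (T n x) ∂μ) atTop (𝓝 0)) :
    L1LocConv μ Ω (fun n x => v n x * (1 - T n x)) u := by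
  intro x hx
  obtain ⟨r, hr, hconv⟩ := h x hx
  have hsum := hconv.add hlim
  rw [add_zero] at hsum
  refine ⟨r, hr, tendsto_of_tendsto_of_tendsto_of_le_of_le tendsto_const_nhds hsum
    (fun _ => zero_le) fun n => ?_⟩
  have hpt : ∀ y, |v n y * (1 - T n y) - u y| ≤ |v n y - u y| + T n y := fun y => by
    calc |v n y * (1 - T n y) - u y| = |v n y - u y - v n y * T n y| := by ring_nf
      _ ≤ |v n y - u y| + |v n y * T n y| := abs_sub _ _
      _ ≤ |v n y - u y| + T n y := by
          rw [abs_mul, abs_of_nonneg (hT0 n y)]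
          exact add_le_add le_rfl (mul_le_of_le_one_left (hT0 n y) (hv n y))
  calc ∫⁻ y in Ω ∩ ball x r, ENNReal.ofReal |v n y * (1 - T n y) - u y| ∂μ
      ≤ ∫⁻ y in Ω ∩ ball x r, (ENNReal.ofReal |v n y - u y| + ENNReal.ofReal (T n y)) ∂μ :=
        lintegral_mono fun y => (ENNReal.ofReal_le_ofReal (hpt y)).trans ENNReal.ofReal_add_le
    _ ≤ ∫⁻ y in Ω ∩ ball x r, ENNReal.ofReal |v n y - u y| ∂μ +
          ∫⁻ y, ENNReal.ofReal (T n y) ∂μ := by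
        rw [lintegral_add_right _ (hT n).ennreal_ofReal]
        exact add_le_add le_rfl (setLIntegral_le_lintegral _ _)

lemma tendsto_lintegral_ballCutoff (hd : Doubling μ Cd) {F : ℕ → Finset (X × ℝ)}
    (hF : ∀ n, BadFamily μ Ω E α (F n)) (hR : ∀ n, ∀ p ∈ F n, p.2 ≤ 1 / ((n : ℝ) + 1))
    {W : ℝ≥0∞} (hW : W ≠ ∞) (hFW : ∀ n, ∑ p ∈ F n, ballWeight μ p ≤ W) :
    Tendsto (fun n => ∫⁻ x, ENNReal.ofReal (ballCutoff (F n) x) ∂μ) atTop (𝓝 0) := by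
  obtain ⟨C, -, hC⟩ := hd.exists_measure_ball_mul_le 4
  have hradius : Tendsto (fun n : ℕ => ENNReal.ofReal (1 / ((n : ℝ) + 1))) atTop (𝓝 0) := by
    simpa only [ENNReal.ofReal_zero] using
      ENNReal.tendsto_ofReal (tendsto_one_div_add_atTop_nhds_zero_nat (𝕜 := ℝ))
  have hbound := ENNReal.Tendsto.const_mul (a := (C : ℝ≥0∞))
    (ENNReal.Tendsto.mul_const hradius (Or.inr hW)) (Or.inr ENNReal.coe_ne_top)
  rw [zero_mul, mul_zero] at hbound
  refine tendsto_of_tendsto_of_tendsto_of_le_of_le tendsto_const_nhds hbound (fun _ => zero_le)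
    fun n => ((hF n).lintegral_ballCutoff_le hC (hR n)).trans ?_
  gcongr
  exact hFW n

lemma PerimApprox.perimOpen_add_le [SecondCountableTopology X] {c : ℝ≥0∞} {v : ℕ → X → ℝ}
    {g : ℕ → X → ℝ≥0∞} (hA : PerimApprox μ Ω E c v g) (hd : Doubling μ Cd) (hΩ : IsOpen Ω)
    (hc : c < ∞) (hα : 0 < α) {F : ℕ → Finset (X × ℝ)} (hF : ∀ n, BadFamily μ Ω E α (F n))
    (hR : ∀ n, ∀ p ∈ F n, p.2 ≤ 1 / ((n : ℝ) + 1))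
    (hdrop : ∀ n, ∀ᶠ i in atTop, ∃ h,
      IsWeakUpperGradientOn μ (fun x => v i x * (1 - ballCutoff (F n) x)) h Ω ∧
        ∫⁻ x in Ω, h x ∂μ + ENNReal.ofReal α * ∑ p ∈ F n, ballWeight μ p ≤ c)
    {w : ℝ≥0∞} (hw : ∀ n, w ≤ ∑ p ∈ F n, ballWeight μ p) :
    perimOpen μ E Ω + ENNReal.ofReal α * w ≤ c := by
  choose i hi using fun n => ((hdrop n).and (eventually_ge_atTop n)).exists
  choose h hh hle using fun n => (hi n).1
  have hα0 : ENNReal.ofReal α ≠ 0 := by simpa using hα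
  have hweight : ∀ n, ∑ p ∈ F n, ballWeight μ p ≤ c / ENNReal.ofReal α := fun n => by
    rw [ENNReal.le_div_iff_mul_le (Or.inl hα0) (Or.inl ENNReal.ofReal_ne_top), mul_comm]
    exact le_add_self.trans (hle n)
  have hlip : ∀ n, LocLipOn (fun x => v (i n) x * (1 - ballCutoff (F n) x)) Ω := fun n =>
    (hA.locLipOn _).mul_one_sub (hA.abs_le_one _) (lipschitzWith_tents (hF n).radius_pos)
      (hF n).ballCutoff_mem_Icc
  have hconv : L1LocConv μ Ω (fun n x => v (i n) x * (1 - ballCutoff (F n) x))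
      (E.indicator fun _ => (1 : ℝ)) :=
    (hA.l1LocConv.comp (tendsto_atTop_mono (fun n => (hi n).2) tendsto_id)).mul_one_sub
      (fun n => hA.abs_le_one _)
      (fun n => (lipschitzWith_tents (hF n).radius_pos).continuous.measurable)
      (fun n x => ((hF n).ballCutoff_mem_Icc x).1)
      (tendsto_lintegral_ballCutoff hd hF hR (ENNReal.div_ne_top hc.ne hα0) hweight)
  have henergy : ∀ n, ∫⁻ x in Ω, h n x ∂μ + ENNReal.ofReal α * w ≤ c := fun n =>
    (add_le_add le_rfl (mul_le_mul_right (hw n) _)).trans (hle n)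
  have hwc : ENNReal.ofReal α * w ≤ c := le_add_self.trans (henergy 0)
  exact add_le_of_le_tsub_right_of_le hwc <| tvOpen_le_of_forall_lintegral_le hΩ hlip hh hconv
    (tsub_le_self.trans_lt hc) fun n =>
      ENNReal.le_sub_of_add_le_right (hwc.trans_lt hc).ne (henergy n)

lemma exists_forall_badFamily_sum_ballWeight_le [ProperSpace X] (hd : Doubling μ Cd)
    (hp : Poincare μ CP lam) :
    ∃ α₀ > 0, ∀ {Ω E : Set X}, IsOpen Ω → MeasurableSet E → perimOpen μ E Ω < ∞ →
      ∀ {α ε : ℝ}, 0 < α → α ≤ α₀ → 0 < ε → ∃ R, 0 < R ∧ R ≤ 1 ∧ ∀ F : Finset (X × ℝ),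
        BadFamily μ Ω E α F → (∀ p ∈ F, p.2 ≤ R) →
          ∑ p ∈ F, ballWeight μ p ≤ ENNReal.ofReal ε := by
  obtain ⟨α₀, hα₀, hdrop⟩ := exists_forall_badFamily_eventually_lintegral_add_le hd hp
  refine ⟨α₀, hα₀, fun {Ω E} hΩ hE hfin {α ε} hα hα_le hε => ?_⟩
  by_contra! hcon
  choose F hF hR hlarge using fun n : ℕ => hcon (1 / ((n : ℝ) + 1)) (by positivity)
    ((div_le_one (by positivity)).2 (by linarith [n.cast_nonneg (α := ℝ)]))
  have hsave : 0 < ENNReal.ofReal α * ENNReal.ofReal ε := by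
    simpa using ⟨hα, hε⟩
  have hlt := ENNReal.lt_add_right hfin.ne hsave.ne'
  obtain ⟨c, hc, hc_lt⟩ := exists_between hlt
  obtain ⟨v, g, hA⟩ := exists_perimApprox hc
  have hc_fin : c < ∞ := hc_lt.trans_le le_top
  exact hc_lt.not_ge (hA.perimOpen_add_le hd hΩ hc_fin hα hF hR
    (fun n => hdrop hΩ hE hc_fin hA hα hα_le (hF n)) fun n => (hlarge n).le)

omit [BorelSpace X] in
lemma exists_countable_badBall_covering [SecondCountableTopology X] {R ε : ℝ}
    (hsum : ∀ F : Finset (X × ℝ), BadFamily μ Ω E α F → (∀ p ∈ F, p.2 ≤ R) →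
      ∑ p ∈ F, ballWeight μ p ≤ ENNReal.ofReal ε) :
    ∃ u : Set (X × ℝ), u.Countable ∧ (∀ p ∈ u, 0 < p.2 ∧ p.2 ≤ R) ∧
      (∀ p, BadBall μ Ω E α p → p.2 ≤ R → ∃ q ∈ u, ball p.1 p.2 ⊆ ball q.1 (24 * q.2)) ∧
      ∑' p : u, ballWeight μ p ≤ ENNReal.ofReal ε := by
  obtain ⟨u, hu_bad, hu, hdisj, hcover⟩ := exists_countable_disjoint_closedBall_covering
    {p : X × ℝ | BadBall μ Ω E α p ∧ p.2 ≤ R} Prod.fst (fun p => 4 * p.2) (4 * R)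
    (fun p hp => mul_pos four_pos hp.1.pos) fun p hp => by linarith [hp.2]
  refine ⟨u, hu, fun p hp => ⟨(hu_bad hp).1.pos, (hu_bad hp).2⟩, fun p hp hpR => ?_, ?_⟩
  · obtain ⟨q, hq, hsub⟩ := hcover p ⟨hp, hpR⟩
    refine ⟨q, hq, ?_⟩
    rw [show 24 * q.2 = 6 * (4 * q.2) by ring]
    exact (ball_subset_closedBall.trans
      (closedBall_subset_closedBall (by linarith [hp.pos]))).trans hsub
  · rw [ENNReal.tsum_eq_iSup_sum]
    refine iSup_le fun t => ?_
    have htu : ∀ p ∈ t.map (Function.Embedding.subtype _), p ∈ u := fun p hp =>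
      Finset.property_of_mem_map_subtype t hp
    simpa only [Finset.sum_map, Function.Embedding.subtype_apply] using
      hsum (t.map (Function.Embedding.subtype _))
      ⟨fun p hp => (hu_bad (htu p hp)).1, hdisj.subset htu⟩ fun p hp => (hu_bad (htu p hp)).2

end SmallWeight

section Exterior

variable {μ : Measure X} {Cd CP lam : ℝ} {Ω E : Set X}

omit [BorelSpace X] in
lemma Doubling.mem_mExterior_of_eventually (h : Doubling μ Cd) {y : X} {s : ℝ} (hs : 0 < s)
    (hsmall : ∀ η > 0, ∀ᶠ k : ℕ in atTop, μ (ball y ((1 / 4) ^ k * s) ∩ E) ≤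
      η * μ (ball y ((1 / 4) ^ k * s))) : y ∈ mExterior μ E := by
  obtain ⟨C, hC1, hC⟩ := h.exists_measure_ball_mul_le 4
  have hC0 : (C : ℝ≥0∞) ≠ 0 := by
    exact_mod_cast (one_pos.trans_le hC1).ne'
  refine ENNReal.tendsto_nhds_zero.2 fun η hη => ?_
  obtain ⟨K, hK⟩ := eventually_atTop.1
    (hsmall (η / C) (ENNReal.div_pos hη.ne' ENNReal.coe_ne_top))
  filter_upwards [Ioo_mem_nhdsGT (show 0 < (1 / 4 : ℝ) ^ K * s by positivity)] with r hr
  obtain ⟨hr0, hrK⟩ := hr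
  have hratio : r / s < (1 / 4) ^ K := (div_lt_iff₀ hs).2 hrK
  obtain ⟨n, hn_lt, hn_le⟩ := exists_nat_pow_near_of_lt_one (div_pos hr0 hs)
    (hratio.le.trans (pow_le_one₀ (by norm_num) (by norm_num)))
    (show (0 : ℝ) < 1 / 4 by norm_num) (by norm_num)
  have hKn : K ≤ n := Nat.lt_succ_iff.1 <| (pow_lt_pow_iff_right_of_lt_one₀
    (show (0 : ℝ) < 1 / 4 by norm_num) (by norm_num)).1 (hn_lt.trans hratio)
  rw [lt_div_iff₀ hs, pow_succ] at hn_lt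
  rw [div_le_iff₀ hs] at hn_le
  refine ENNReal.div_le_of_le_mul ?_
  calc μ (ball y r ∩ E) ≤ μ (ball y ((1 / 4) ^ n * s) ∩ E) := by gcongr
    _ ≤ η / C * μ (ball y ((1 / 4) ^ n * s)) := hK n hKn
    _ ≤ η / C * μ (ball y (4 * r)) := by
        refine mul_le_mul_right (measure_mono (ball_subset_ball ?_)) _
        linarith
    _ ≤ η / C * (C * μ (ball y r)) := by
        gcongr
        exact hC y r hr0
    _ = η * μ (ball y r) := by rw [← mul_assoc, ENNReal.div_mul_cancel hC0 ENNReal.coe_ne_top]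

omit [BorelSpace X] in
lemma badBall_of_density {α s : ℝ} {y : X} {k : ℕ} (hs : 0 < s) (hsub : closedBall y s ⊆ Ω)
    (hlow : ENNReal.ofReal α * μ (ball y ((1 / 4) ^ (k + 1) * s)) ≤
      μ (ball y ((1 / 4) ^ (k + 1) * s) ∩ E))
    (hup : μ (ball y ((1 / 4) ^ k * s) ∩ E) ≤
      ENNReal.ofReal (2 * α) * μ (ball y ((1 / 4) ^ k * s))) :
    BadBall μ Ω E α (y, (1 / 4) ^ (k + 1) * s) := by
  have hscale : 4 * ((1 / 4 : ℝ) ^ (k + 1) * s) = (1 / 4) ^ k * s := by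
    rw [pow_succ]
    ring
  refine ⟨by positivity, ?_, hlow, hscale.symm ▸ hup⟩
  rw [hscale]
  exact (closedBall_subset_closedBall
    (mul_le_of_le_one_left hs.le (pow_le_one₀ (by norm_num) (by norm_num)))).trans hsub

omit [BorelSpace X] in
lemma Doubling.exists_frequently_density_ge (h : Doubling μ Cd) {y : X} {α₀ s : ℝ} (hs : 0 < s)
    (hy : y ∉ mExterior μ E) :
    ∃ j : ℕ, ∃ᶠ k : ℕ in atTop, ENNReal.ofReal (α₀ * (1 / 2) ^ j) *
      μ (ball y ((1 / 4) ^ k * s)) ≤ μ (ball y ((1 / 4) ^ k * s) ∩ E) := by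
  by_contra! hcon
  refine hy (h.mem_mExterior_of_eventually hs fun η hη => ?_)
  have hlim : Tendsto (fun j : ℕ => ENNReal.ofReal (α₀ * (1 / 2) ^ j)) atTop (𝓝 0) := by
    simpa using ENNReal.tendsto_ofReal ((tendsto_pow_atTop_nhds_zero_of_lt_one
      (show (0 : ℝ) ≤ 1 / 2 by norm_num) (by norm_num)).const_mul α₀)
  obtain ⟨j, hj⟩ := (hlim.eventually (gt_mem_nhds hη)).exists
  filter_upwards [hcon j] with k hk using hk.le.trans (mul_le_mul_left hj.le _)

-- `j` is the first level reached by the densities along `(1/4) ^ k * s` infinitely often; the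
-- radius `r` is where they cross from below `2 * α₀ * (1/2) ^ j` to above `α₀ * (1/2) ^ j`.
omit [BorelSpace X] in
lemma Doubling.exists_badBall (h : Doubling μ Cd) {y : X} {α₀ s : ℝ} (hα₀ : 0 < α₀) (hs : 0 < s)
    (hsub : closedBall y s ⊆ Ω)
    (hsmall : μ (ball y s ∩ E) < ENNReal.ofReal α₀ * μ (ball y s)) (hy : y ∉ mExterior μ E)
    {R : ℕ → ℝ} (hR : ∀ j, 0 < R j) (hsR : s ≤ R 0) :
    ∃ (j : ℕ) (r : ℝ), BadBall μ Ω E (α₀ * (1 / 2) ^ j) (y, r) ∧ r ≤ R j := by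
  let P : ℕ → ℕ → Prop := fun j k => ENNReal.ofReal (α₀ * (1 / 2) ^ j) *
    μ (ball y ((1 / 4) ^ k * s)) ≤ μ (ball y ((1 / 4) ^ k * s) ∩ E)
  have hexists : ∃ j, ∃ᶠ k in atTop, P j k := h.exists_frequently_density_ge hs hy
  by_cases h0 : ∃ᶠ k in atTop, P 0 k
  · obtain ⟨k, hk, hk_succ⟩ := Nat.exists_not_and_succ_of_not_zero_of_exists (p := P 0)
      (by simpa [P] using hsmall) h0.exists
    refine ⟨0, _, badBall_of_density hs hsub hk_succ ((not_le.1 hk).le.trans ?_), ?_⟩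
    · refine mul_le_mul_left (ENNReal.ofReal_le_ofReal ?_) _
      linarith [show 0 < α₀ * (1 / 2 : ℝ) ^ 0 by positivity]
    · exact (mul_le_of_le_one_left hs.le (pow_le_one₀ (by norm_num) (by norm_num))).trans hsR
  · obtain ⟨j, hj, hj_succ⟩ := Nat.exists_not_and_succ_of_not_zero_of_exists
      (p := fun j => ∃ᶠ k in atTop, P j k) h0 hexists
    have hlim : Tendsto (fun k : ℕ => (1 / 4 : ℝ) ^ (k + 1) * s) atTop (𝓝 0) := by
      simpa using ((tendsto_pow_atTop_nhds_zero_of_lt_one (show (0 : ℝ) ≤ 1 / 4 by norm_num)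
        (by norm_num)).comp (tendsto_add_atTop_nat 1)).mul_const s
    rw [← map_add_atTop_eq_nat 1, frequently_map] at hj_succ
    obtain ⟨k, hk_succ, hk, hkR⟩ := (hj_succ.and_eventually
      ((not_frequently.1 hj).and (hlim.eventually (gt_mem_nhds (hR (j + 1)))))).exists
    refine ⟨j + 1, _, badBall_of_density hs hsub hk_succ ((not_le.1 hk).le.trans_eq ?_), hkR.le⟩
    rw [show 2 * (α₀ * (1 / 2 : ℝ) ^ (j + 1)) = α₀ * (1 / 2) ^ j by ring]

omit [BorelSpace X] in
lemma Doubling.exists_measure_inter_lt_of_mem_mExterior (h : Doubling μ Cd) {x : X}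
    (hx : x ∈ mExterior μ E) {α δ : ℝ} (hα : 0 < α) (hδ : 0 < δ) :
    ∃ s, 0 < s ∧ s < δ ∧ ∀ y ∈ ball x s,
      μ (ball y s ∩ E) < ENNReal.ofReal α * μ (ball y s) := by
  obtain ⟨C, hC1, hC⟩ := h.exists_measure_ball_mul_le 3
  have hC0 : 0 < C := one_pos.trans_le hC1
  have hC0' : (C : ℝ≥0∞) ≠ 0 := by exact_mod_cast hC0.ne'
  have hdensity : ∀ᶠ r in 𝓝[>] (0 : ℝ),
      μ (ball x r ∩ E) / μ (ball x r) < ENNReal.ofReal α / C :=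
    Tendsto.eventually hx (gt_mem_nhds
      (ENNReal.div_pos (ENNReal.ofReal_pos.2 hα).ne' ENNReal.coe_ne_top))
  obtain ⟨r, hr, hr0, hrδ⟩ := (hdensity.and (Ioo_mem_nhdsGT hδ)).exists
  rw [ENNReal.div_lt_iff (Or.inl (h.measure_ball_pos x hr0).ne')
    (Or.inl (h.measure_ball_lt_top x r).ne)] at hr
  refine ⟨r / 2, by positivity, by linarith, fun y hy => ?_⟩
  have hyx : dist y x < r / 2 := hy
  calc μ (ball y (r / 2) ∩ E) ≤ μ (ball x r ∩ E) := by
        gcongr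
        exact ball_subset_ball' (by linarith)
    _ < ENNReal.ofReal α / C * μ (ball x r) := hr
    _ ≤ ENNReal.ofReal α / C * (C * μ (ball y (r / 2))) := by
        refine mul_le_mul_right ((measure_mono (ball_subset_ball' ?_)).trans
          (hC y (r / 2) (by positivity))) _
        rw [dist_comm]
        linarith
    _ = ENNReal.ofReal α * μ (ball y (r / 2)) := by
        rw [← mul_assoc, ENNReal.div_mul_cancel hC0' ENNReal.coe_ne_top]

omit [BorelSpace X] in
lemma Doubling.isOpen_mExterior_inter_union (h : Doubling μ Cd) (hΩ : IsOpen Ω) {α₀ : ℝ}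
    (hα₀ : 0 < α₀) {R : ℕ → ℝ} (hR : ∀ j, 0 < R j) {G : Set X} (hG : IsOpen G)
    (hbad : ∀ j p, BadBall μ Ω E (α₀ * (1 / 2) ^ j) p → p.2 ≤ R j → ball p.1 p.2 ⊆ G) :
    IsOpen (mExterior μ E ∩ Ω ∪ G) := by
  rw [isOpen_iff_mem_nhds]
  rintro x (⟨hxE, hxΩ⟩ | hxG)
  · obtain ⟨δ, hδ, hδΩ⟩ := Metric.isOpen_iff.1 hΩ x hxΩ
    obtain ⟨s, hs, hsδ, hsmall⟩ := h.exists_measure_inter_lt_of_mem_mExterior hxE hα₀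
      (lt_min (half_pos hδ) (hR 0))
    obtain ⟨hsδ, hsR⟩ := lt_min_iff.1 hsδ
    filter_upwards [ball_mem_nhds x hs] with y hy
    have hyx : dist y x < s := hy
    have hsub : closedBall y s ⊆ Ω := (closedBall_subset_ball' (by linarith)).trans hδΩ
    by_cases hyE : y ∈ mExterior μ E
    · exact Or.inl ⟨hyE, hsub (mem_closedBall_self hs.le)⟩
    · obtain ⟨j, r, hball, hr⟩ := h.exists_badBall hα₀ hs hsub (hsmall y hy) hyE hR hsR.le
      exact Or.inr (hbad j _ hball hr (mem_ball_self hball.pos))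
  · exact mem_of_superset (hG.mem_nhds hxG) subset_union_right

omit [BorelSpace X] in
lemma Doubling.exists_measure_ball_mul_le_ballWeight (h : Doubling μ Cd) {K : ℝ} (hK : 1 ≤ K) :
    ∃ C : ℝ≥0, 0 < C ∧ ∀ p : X × ℝ, 0 < p.2 → p.2 ≤ 1 →
      μ (ball p.1 (2 * (K * p.2))) * (1 + ENNReal.ofReal (1 / (K * p.2))) ≤
        C * ballWeight μ p := by
  obtain ⟨C, hC1, hC⟩ := h.exists_measure_ball_mul_le (2 * K)
  refine ⟨C * 2, by positivity, fun p hp0 hp1 => ?_⟩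
  have hgrad : 1 + ENNReal.ofReal (1 / (K * p.2)) ≤ 2 * ENNReal.ofReal (1 / p.2) := by
    have h1 : 1 ≤ 1 / p.2 := (one_le_div hp0).2 hp1
    have h2 : 1 / (K * p.2) ≤ 1 / p.2 :=
      one_div_le_one_div_of_le hp0 (le_mul_of_one_le_left hp0.le hK)
    rw [two_mul]
    exact add_le_add (ENNReal.one_le_ofReal.2 h1) (ENNReal.ofReal_le_ofReal h2)
  calc μ (ball p.1 (2 * (K * p.2))) * (1 + ENNReal.ofReal (1 / (K * p.2)))
      ≤ C * μ (ball p.1 p.2) * (2 * ENNReal.ofReal (1 / p.2)) := by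
        rw [← mul_assoc]
        exact mul_le_mul' (hC p.1 p.2 hp0) hgrad
    _ = (C * 2 : ℝ≥0) * ballWeight μ p := by
        rw [ballWeight]
        push_cast
        ring

lemma capa1_lt_of_forall_tsum_ballWeight_le {K ε : ℝ} (hK : 0 < K) (hε : 0 < ε) {C : ℝ≥0}
    (hC : 0 < C) {u : ℕ → Set (X × ℝ)} (hcount : ∀ j, (u j).Countable)
    (hpos : ∀ j, ∀ p ∈ u j, 0 < p.2)
    (hle : ∀ j, ∀ p ∈ u j, μ (ball p.1 (2 * (K * p.2))) *
      (1 + ENNReal.ofReal (1 / (K * p.2))) ≤ C * ballWeight μ p)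
    (hsum : ∀ j, ∑' p : u j, ballWeight μ p ≤ ENNReal.ofReal (ε / (4 * C) * (1 / 2) ^ j))
    {G : Set X} (hG : G ⊆ ⋃ (j) (p ∈ u j), ball p.1 (K * p.2)) :
    capa1 μ G < ENNReal.ofReal ε := by
  have := fun j => (hcount j).to_subtype
  have hGσ : G ⊆ ⋃ q : Σ j, u j, ball q.2.1.1 (K * q.2.1.2) := by
    simpa only [iUnion_sigma, biUnion_eq_iUnion] using hG
  calc capa1 μ G
      ≤ ∑' q : Σ j, u j, μ (ball q.2.1.1 (2 * (K * q.2.1.2))) *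
          (1 + ENNReal.ofReal (1 / (K * q.2.1.2))) :=
        capa1_le_tsum_measure_ball _ (fun q => mul_pos hK (hpos q.1 _ q.2.2)) hGσ
    _ ≤ ∑' q : Σ j, u j, C * ballWeight μ q.2.1 :=
        ENNReal.tsum_le_tsum fun q => hle q.1 _ q.2.2
    _ = ∑' j, C * ∑' p : u j, ballWeight μ p := by
        simp only [ENNReal.tsum_sigma', ENNReal.tsum_mul_left]
    _ ≤ ∑' j : ℕ, ENNReal.ofReal (ε / 4 * (1 / 2) ^ j) := by
        refine ENNReal.tsum_le_tsum fun j => (mul_le_mul_right (hsum j) _).trans_eq ?_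
        rw [← ENNReal.ofReal_coe_nnreal, ← ENNReal.ofReal_mul C.coe_nonneg]
        have hC' : (C : ℝ) ≠ 0 := by exact_mod_cast hC.ne'
        congr 1
        field_simp
    _ = ENNReal.ofReal (ε / 4 * 2) := by
        rw [← ENNReal.ofReal_tsum_of_nonneg (fun j => by positivity)
          (summable_geometric_two.mul_left _), tsum_mul_left, tsum_geometric_two]
    _ < ENNReal.ofReal ε := (ENNReal.ofReal_lt_ofReal_iff hε).2 (by linarith)

lemma quasiOpen_mExterior_inter_of_measurableSet [ProperSpace X] (hd : Doubling μ Cd)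
    (hp : Poincare μ CP lam) (hΩ : IsOpen Ω) (hE : MeasurableSet E)
    (hfin : perimOpen μ E Ω < ∞) : QuasiOpen μ (mExterior μ E ∩ Ω) := by
  intro ε hε
  obtain ⟨C, hC, hCle⟩ := hd.exists_measure_ball_mul_le_ballWeight (K := 24) (by norm_num)
  obtain ⟨α₀, hα₀, hsum⟩ := exists_forall_badFamily_sum_ballWeight_le hd hp
  choose R hR hR1 hRsum using fun j : ℕ => hsum hΩ hE hfin (α := α₀ * (1 / 2) ^ j)
    (ε := ε / (4 * C) * (1 / 2) ^ j) (by positivity)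
    (mul_le_of_le_one_right hα₀.le (pow_le_one₀ (by norm_num) (by norm_num))) (by positivity)
  choose u hcount hu hcover husum using fun j => exists_countable_badBall_covering (hRsum j)
  let G : Set X := ⋃ (j : ℕ) (p : X × ℝ)
    (_ : BadBall μ Ω E (α₀ * (1 / 2) ^ j) p ∧ p.2 ≤ R j), ball p.1 p.2
  have hG : IsOpen G := isOpen_iUnion fun _ => isOpen_biUnion fun _ _ => isOpen_ball
  refine ⟨G, hG, ?_, hd.isOpen_mExterior_inter_union hΩ hα₀ hR hG fun j p hbad hpR => ?_⟩
  · refine capa1_lt_of_forall_tsum_ballWeight_le (by norm_num) hε hC hcount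
      (fun j p hp => (hu j p hp).1)
      (fun j p hp => hCle p (hu j p hp).1 ((hu j p hp).2.trans (hR1 j))) husum ?_
    refine iUnion_mono fun j => iUnion₂_subset fun p hp => ?_
    obtain ⟨q, hq, hpq⟩ := hcover j p hp.1 hp.2
    exact hpq.trans (subset_biUnion_of_mem (u := fun q : X × ℝ => ball q.1 (24 * q.2)) hq)
  · exact subset_iUnion_of_subset j
      (subset_biUnion_of_mem (u := fun p : X × ℝ => ball p.1 p.2) ⟨hbad, hpR⟩)

end Exterior

section Invariance

variable {μ : Measure X} {Ω E E' : Set X}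

omit [MeasurableSpace X] [BorelSpace X] in
lemma ugIneq_const_sub_iff {u : X → ℝ} {g : X → ℝ≥0∞} {γ : Curve X} (a : ℝ) :
    UGIneq (fun x => a - u x) g γ ↔ UGIneq u g γ := by
  rw [UGIneq, UGIneq, sub_sub_sub_cancel_left, abs_sub_comm]

omit [BorelSpace X] in
lemma isMinimalWUG_const_sub_iff {u : X → ℝ} {g : X → ℝ≥0∞} (a : ℝ) :
    IsMinimalWUG μ (fun x => a - u x) g Ω ↔ IsMinimalWUG μ u g Ω := by
  simp only [IsMinimalWUG, IsWeakUpperGradientOn, ugIneq_const_sub_iff]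

omit [BorelSpace X] in
lemma L1LocConv.const_sub {v : ℕ → X → ℝ} {u : X → ℝ} (hv : L1LocConv μ Ω v u) (a : ℝ) :
    L1LocConv μ Ω (fun i x => a - v i x) (fun x => a - u x) := by
  simpa only [L1LocConv, sub_sub_sub_cancel_left, abs_sub_comm] using hv

omit [BorelSpace X] in
lemma tvOpen_const_sub_le (u : X → ℝ) (a : ℝ) :
    tvOpen μ Ω (fun x => a - u x) ≤ tvOpen μ Ω u :=
  le_iInf fun v => le_iInf fun g => le_iInf fun hv => le_iInf fun hg => le_iInf fun hconv =>
    iInf_le_of_le (fun i x => a - v i x) <| iInf_le_of_le g <|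
      iInf_le_of_le (fun i => (hv i).of_abs_sub_le fun x y => by
        rw [sub_sub_sub_cancel_left, abs_sub_comm]) <|
      iInf_le_of_le (fun i => (isMinimalWUG_const_sub_iff a).2 (hg i)) <|
      iInf_le_of_le (hconv.const_sub a) le_rfl

omit [BorelSpace X] in
lemma perimOpen_compl_le (E : Set X) : perimOpen μ Eᶜ Ω ≤ perimOpen μ E Ω := by
  have hcompl : Eᶜ.indicator (fun _ => (1 : ℝ)) = fun x => 1 - E.indicator (fun _ => 1) x :=
    indicator_compl E _
  rw [perimOpen, hcompl]
  exact tvOpen_const_sub_le _ 1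

omit [BorelSpace X] in
lemma perimOpen_congr (h : E =ᵐ[μ] E') : perimOpen μ E Ω = perimOpen μ E' Ω := by
  have hind : E.indicator (fun _ => (1 : ℝ)) =ᵐ[μ] E'.indicator fun _ => 1 :=
    indicator_ae_eq_of_ae_eq_set h
  have hint : ∀ (v : X → ℝ) (A : Set X),
      ∫⁻ y in A, ENNReal.ofReal |v y - E.indicator (fun _ => (1 : ℝ)) y| ∂μ =
        ∫⁻ y in A, ENNReal.ofReal |v y - E'.indicator (fun _ => (1 : ℝ)) y| ∂μ := by
    refine fun v A => lintegral_congr_ae ?_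
    filter_upwards [ae_restrict_of_ae hind] with y hy
    rw [hy]
  simp only [perimOpen, tvOpen, L1LocConv, hint]

omit [BorelSpace X] in
lemma mExterior_congr (h : E =ᵐ[μ] E') : mExterior μ E = mExterior μ E' := by
  have hball : ∀ x r, μ (ball x r ∩ E) = μ (ball x r ∩ E') :=
    fun x r => measure_congr (EventuallyEq.rfl.inter h)
  simp only [mExterior, hball]

omit [BorelSpace X] in
lemma mInterior_eq_mExterior_compl (E : Set X) : mInterior μ E = mExterior μ Eᶜ := by
  simp only [mInterior, mExterior, sdiff_eq]

end Invariance

lemma quasiOpen_mExterior_inter [ProperSpace X] {μ : Measure X} {Cd CP lam : ℝ} {Ω E : Set X}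
    (hd : Doubling μ Cd) (hp : Poincare μ CP lam) (hΩ : IsOpen Ω) (hE : NullMeasurableSet E μ)
    (hfin : perimOpen μ E Ω < ∞) : QuasiOpen μ (mExterior μ E ∩ Ω) := by
  obtain ⟨E', -, hE', hEE'⟩ := hE.exists_measurable_superset_ae_eq
  rw [← mExterior_congr hEE']
  rw [← perimOpen_congr hEE'] at hfin
  exact quasiOpen_mExterior_inter_of_measurableSet hd hp hΩ hE' hfin

/-- If `Ω` is open and `E` is `μ`-measurable with `P(E,Ω) < ∞`, then
the sets `I_E ∩ Ω` and `O_E ∩ Ω` are `1`-quasiopen, where `I_E` and `O_E` are the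
measure-theoretic interior and exterior of `E`. -/
theorem mInterior_mExterior_quasiopen
    (μ : Measure X) (hcomp : CompleteSpace X)
    (hdoub : ∃ Cd : ℝ, Doubling μ Cd) (hpoin : ∃ CP lam : ℝ, Poincare μ CP lam)
    (Ω : Set X) (hΩ : IsOpen Ω) (E : Set X) (hE : NullMeasurableSet E μ)
    (hfin : perimOpen μ E Ω < ∞) :
    QuasiOpen μ (mInterior μ E ∩ Ω) ∧ QuasiOpen μ (mExterior μ E ∩ Ω) := by
  obtain ⟨Cd, hd⟩ := hdoub
  obtain ⟨CP, lam, hp⟩ := hpoin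
  have : ProperSpace X := hd.properSpace
  rw [mInterior_eq_mExterior_compl]
  exact ⟨quasiOpen_mExterior_inter hd hp hΩ hE.compl ((perimOpen_compl_le E).trans_lt hfin),
    quasiOpen_mExterior_inter hd hp hΩ hE hfin⟩

end PaperBV
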